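/- In the orthogonal case, each of SX^j and X^j \ SX^j contains at most two SG^j(E)-orbits. Moreover, for n = 2: if det j ∈ -F^{×2} then SX^j is a single SG^j(E)-orbit, and if det j ∈ -ı²·F^{×2} then X^j \ SX^j is a single SG^j(E)-orbit. -/

import Mathlib

open Matrix

namespace OrthPair

variable {E : Type} [Field E]

/-- `g ∈ G^j(E) = {g ∈ GL_n(E) : gᵀ j g = j}` (orthogonal case). -/
def Gj {n : ℕ} (j g : Matrix (Fin n) (Fin n) E) : Prop :=
  IsUnit g ∧ gᵀ * j * g = j

/-- `x ∈ X^j = {x ∈ G^j(E) : x·σ(x) = 1}`. -/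
def Xj {n : ℕ} (σ : E → E) (j x : Matrix (Fin n) (Fin n) E) : Prop :=
  Gj j x ∧ x * x.map σ = 1

/-- `x ∈ SX^j = X^j ∩ SL_n(E)`. -/
def SXj {n : ℕ} (σ : E → E) (j x : Matrix (Fin n) (Fin n) E) : Prop :=
  Xj σ j x ∧ x.det = 1

/-- `x'` lies in the `SG^j(E) = G^j(E) ∩ SL_n(E)`-orbit of `x` for twisted conjugation
`g·x = g x σ(g)⁻¹`. -/
def orbSG {n : ℕ} (σ : E → E) (j x x' : Matrix (Fin n) (Fin n) E) : Prop :=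
  ∃ g, Gj j g ∧ g.det = 1 ∧ x' = g * x * (g.map σ)⁻¹

end OrthPair

open OrthPair

/-!
Let `F` be the fixed field of `σ`. By Hilbert 90 every `x ∈ X^j` is `h σ(h)⁻¹` for some `h`, and
`hᵀ j h` is then a nondegenerate quadratic form over `F`. Its isometry class determines the
`G^j(E)`-orbit of `x`, which is also an `SG^j(E)`-orbit because the form has reflections, and its
discriminant up to squares is determined by `det x`. So the orbits in `SX^j` and in `X^j \ SX^j`
inject into the isometry classes of forms over `F` of fixed rank and discriminant. There are at most
two of these: two binary forms of discriminant `δ` are isometric as soon as they represent values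
with the same class modulo the norm group of `F(√-δ)`, of index at most two, and three forms of
rank at least three have a common value to split off, because a ternary form represents all but at
most one of the square classes, of which there are at least four. When `-δ` is a square, the binary
form is the hyperbolic plane.

That norm groups of quadratic extensions `L/F` have index two follows, without class field theory,
from the formula `2 [Lˣ : Lˣ²] [Fˣ : N Lˣ] = [Fˣ : Fˣ²]²` and the count of square classes
`[Kˣ : Kˣ²] = 4 |ℤ_p / 2|^[K : ℚ_p]`, which comes from Hensel's lemma.
-/

namespace OrthPair

/-! ### Counting square classes -/

theorem index_range_powMonoidHom_int (k : ℕ) :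
    (powMonoidHom k : Multiplicative ℤ →* Multiplicative ℤ).range.index = k := by
  have : (powMonoidHom k : Multiplicative ℤ →* Multiplicative ℤ).range =
      AddSubgroup.toSubgroup (AddSubgroup.zmultiples (k : ℤ)) := by
    ext x
    refine exists_congr fun a => ?_
    rw [powMonoidHom_apply, ← Multiplicative.toAdd.injective.eq_iff, toAdd_pow, nsmul_eq_mul,
      mul_comm]
    rfl
  rw [this, AddSubgroup.index_toSubgroup, Int.index_zmultiples, Int.natAbs_natCast]

theorem index_range_powMonoidHom_of_exact {G A : Type*} [CommGroup G] [CommGroup A]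
    (i : A →* G) (v : G →* Multiplicative ℤ) (hi : Function.Injective i)
    (hv : Function.Surjective v) (hiv : i.range = v.ker) {k : ℕ} (hk : k ≠ 0) :
    (powMonoidHom k : G →* G).range.index = k * (powMonoidHom k : A →* A).range.index := by
  set S := (powMonoidHom k : G →* G).range
  have map_eq : S.map v = (powMonoidHom k).range := by
    rw [← MonoidHom.range_comp]
    have : v.comp (powMonoidHom k) = (powMonoidHom k).comp v := by ext; simp
    rw [this, MonoidHom.range_comp, MonoidHom.range_eq_top.2 hv, MonoidHom.range_eq_map]
  have comap_eq : S.comap i = (powMonoidHom k).range := by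
    ext a
    constructor
    · rintro ⟨g, hg : g ^ k = i a⟩
      have hvg : v g ^ k = 1 := by
        rw [← map_pow, hg, ← MonoidHom.mem_ker, ← hiv]
        exact ⟨a, rfl⟩
      obtain ⟨b, rfl⟩ : g ∈ i.range := by
        rw [hiv, MonoidHom.mem_ker]
        exact (pow_eq_one_iff_left hk).1 hvg
      exact ⟨b, hi (by simpa using hg)⟩
    · rintro ⟨b, rfl⟩
      exact ⟨i b, by simp⟩
  have index_sup : (S ⊔ v.ker).index = k := by
    rw [← index_range_powMonoidHom_int k, ← map_eq, Subgroup.index_map,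
      MonoidHom.range_eq_top.2 hv, Subgroup.index_top, mul_one]
  have relIndex_sup : S.relIndex (S ⊔ v.ker) = (powMonoidHom k : A →* A).range.index := by
    rw [sup_comm, Subgroup.relIndex_sup_right, ← hiv, ← Subgroup.index_comap, comap_eq]
  rw [← Subgroup.relIndex_mul_index (le_sup_left : S ≤ S ⊔ v.ker), index_sup, relIndex_sup,
    mul_comm]

theorem index_range_eq_card_ker_mul_relIndex {G : Type*} [CommGroup G] (f : G →* G)
    (V : Subgroup G) [V.FiniteIndex] (hle : V.map f ≤ V) (hker : f.ker ⊓ V = ⊥) :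
    f.range.index = Nat.card f.ker * (V.map f).relIndex V := by
  have index_map : (V.map f).index = (V ⊔ f.ker).index * f.range.index := Subgroup.index_map V f
  have index_map' : (V.map f).relIndex V * V.index = (V.map f).index :=
    Subgroup.relIndex_mul_index hle
  have index_V : V.relIndex (V ⊔ f.ker) * (V ⊔ f.ker).index = V.index :=
    Subgroup.relIndex_mul_index le_sup_left
  have relIndex_V : V.relIndex (V ⊔ f.ker) = Nat.card f.ker := by
    rw [Subgroup.relIndex_sup_left, ← Subgroup.inf_relIndex_left, hker, Subgroup.relIndex_bot_left]
  have index_ne_zero : (V ⊔ f.ker).index ≠ 0 := by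
    rintro h
    exact Subgroup.FiniteIndex.index_ne_zero (H := V) (by rw [← index_V, h, mul_zero])
  refine mul_left_cancel₀ index_ne_zero ?_
  rw [← index_map, ← index_map', ← index_V, relIndex_V]
  ring

section CongruenceUnits

variable {R : Type*} [CommRing R]

/-- The congruence subgroup `1 + cR` of the unit group of `R`, for `c` a generator of the level. -/
def congruenceUnits (c : R) : Subgroup Rˣ :=
  (Units.map (Ideal.Quotient.mk (Ideal.span {c})).toMonoidHom).ker

theorem mem_congruenceUnits {c : R} {u : Rˣ} :
    u ∈ congruenceUnits c ↔ c ∣ (u : R) - 1 := by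
  rw [congruenceUnits, MonoidHom.mem_ker, Units.ext_iff, ← Ideal.mem_span_singleton,
    ← Ideal.Quotient.mk_eq_mk_iff_sub_mem]
  rfl

theorem finiteIndex_congruenceUnits (c : R) [Finite (R ⧸ Ideal.span {c})] :
    (congruenceUnits c).FiniteIndex := by
  unfold congruenceUnits
  infer_instance

theorem exists_mem_congruenceUnits {P c : R} (hP : Ideal.span {P} ≤ Ideal.jacobson ⊥)
    (hPc : P ∣ c) (r : R) : ∃ u ∈ congruenceUnits c, (u : R) = 1 + c * r := by
  have hc : c * r ∈ Ideal.jacobson (⊥ : Ideal R) :=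
    hP (Ideal.mem_span_singleton.2 (hPc.mul_right r))
  have hu : IsUnit (1 + c * r) := by
    simpa [add_comm] using Ideal.mem_jacobson_bot.1 hc 1
  exact ⟨hu.unit, mem_congruenceUnits.2 ⟨r, by simp⟩, rfl⟩

open Polynomial in
theorem exists_sq_add_self_eq {P : R} [HenselianRing R (Ideal.span {P})] (w : R) (hw : P ∣ w) :
    ∃ r, P ∣ r ∧ r ^ 2 + r = w := by
  have monic : (X ^ 2 + X - C w : R[X]).Monic := by
    monicity!
  obtain ⟨r, hr, hr'⟩ := HenselianRing.is_henselian (I := Ideal.span {P}) (X ^ 2 + X - C w)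
    monic 0 (by simpa [Ideal.mem_span_singleton] using hw) (by simp)
  refine ⟨r, ?_, ?_⟩
  · simpa [Ideal.mem_span_singleton] using hr'
  · simpa [IsRoot, sub_eq_zero] using hr

/- `1 + 4s = (1 + 2r)²` as soon as `r² + r = s`. -/
theorem map_powMonoidHom_congruenceUnits (P : R) [HenselianRing R (Ideal.span {P})] :
    (congruenceUnits (2 * P)).map (powMonoidHom 2) = congruenceUnits (2 * P * 2) := by
  have hP : Ideal.span {P} ≤ Ideal.jacobson ⊥ := HenselianRing.jac
  ext u
  constructor
  · rintro ⟨v, hv, rfl⟩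
    obtain ⟨r, hr⟩ := mem_congruenceUnits.1 hv
    refine mem_congruenceUnits.2 ⟨P * r ^ 2 + r, ?_⟩
    rw [powMonoidHom_apply, Units.val_pow_eq_pow_val]
    linear_combination ((v : R) + 1 + 2 * P * r) * hr
  · intro hu
    obtain ⟨s, hs⟩ := mem_congruenceUnits.1 hu
    obtain ⟨_, ⟨r, rfl⟩, hr⟩ := exists_sq_add_self_eq (P * s) (dvd_mul_right P s)
    obtain ⟨v, hv, hvr⟩ := exists_mem_congruenceUnits hP (dvd_mul_left P 2) r
    refine ⟨v, hv, Units.ext ?_⟩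
    rw [powMonoidHom_apply, Units.val_pow_eq_pow_val, hvr]
    linear_combination 4 * hr - hs

variable [IsDomain R]

/- The isomorphism `(1 + cR) / (1 + cdR) ≃ R / dR` is `1 + cr ↦ r`; it is additive because
`(1 + cr)(1 + cs) = 1 + c(r + s + crs)` and `d ∣ c`. -/
theorem relIndex_congruenceUnits {P c d : R} (hP : Ideal.span {P} ≤ Ideal.jacobson ⊥)
    (hPc : P ∣ c) (hdc : d ∣ c) (hc : c ≠ 0) :
    (congruenceUnits (c * d)).relIndex (congruenceUnits c) = Nat.card (R ⧸ Ideal.span {d}) := by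
  choose r hr using fun u : congruenceUnits c => mem_congruenceUnits.1 u.2
  have r_mul (u v) : r (u * v) = r u + r v + c * (r u * r v) := by
    refine mul_left_cancel₀ hc ?_
    rw [← hr, Subgroup.coe_mul, Units.val_mul]
    linear_combination ((v : Rˣ) : R) * hr u + (1 + c * r u) * hr v
  let φ : congruenceUnits c →* Multiplicative (R ⧸ Ideal.span {d}) :=
    MonoidHom.mk' (fun u => .ofAdd (Ideal.Quotient.mk _ (r u))) fun u v => by
      rw [← ofAdd_add, ← map_add, r_mul, Multiplicative.ofAdd.injective.eq_iff,
        Ideal.Quotient.mk_eq_mk_iff_sub_mem,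
        add_sub_cancel_left, Ideal.mem_span_singleton]
      exact hdc.mul_right _
  have φ_surjective : Function.Surjective φ := by
    intro z
    obtain ⟨s, hs⟩ := Ideal.Quotient.mk_surjective z.toAdd
    obtain ⟨u, hu, hus⟩ := exists_mem_congruenceUnits hP hPc s
    refine ⟨⟨u, hu⟩, ?_⟩
    have : r ⟨u, hu⟩ = s := mul_left_cancel₀ hc (by rw [← hr, hus, add_sub_cancel_left])
    simp only [φ, MonoidHom.mk'_apply, this, hs, ofAdd_toAdd]
  have φ_ker : φ.ker = (congruenceUnits (c * d)).subgroupOf (congruenceUnits c) := by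
    ext u
    rw [MonoidHom.mem_ker, Subgroup.mem_subgroupOf, mem_congruenceUnits, hr,
      mul_dvd_mul_iff_left hc, ← Ideal.mem_span_singleton, ← Ideal.Quotient.eq_zero_iff_mem]
    rfl
  rw [Subgroup.relIndex, ← φ_ker, Subgroup.index_ker, MonoidHom.range_eq_top.2 φ_surjective,
    Subgroup.card_top]
  rfl

theorem card_ker_powMonoidHom_two (h2 : (2 : R) ≠ 0) :
    Nat.card (powMonoidHom 2 : Rˣ →* Rˣ).ker = 2 := by
  have coe_ker : ((powMonoidHom 2 : Rˣ →* Rˣ).ker : Set Rˣ) = {1, -1} := by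
    ext u
    rw [SetLike.mem_coe, MonoidHom.mem_ker, powMonoidHom_apply, Set.mem_insert_iff,
      Set.mem_singleton_iff, Units.ext_iff, Units.ext_iff, Units.ext_iff,
      Units.val_pow_eq_pow_val, Units.val_one, Units.val_neg, Units.val_one, sq_eq_one_iff]
  have one_ne_neg_one : (1 : Rˣ) ≠ -1 := fun h => h2 (by
    have h : (1 : R) = -1 := congrArg Units.val h
    linear_combination h)
  rw [← SetLike.coe_sort_coe, coe_ker, Nat.card_coe_set_eq, Set.ncard_pair one_ne_neg_one]

theorem ker_inf_congruenceUnits (h2 : (2 : R) ≠ 0) {P : R}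
    (hP : Ideal.span {P} ≤ Ideal.jacobson ⊥) :
    (powMonoidHom 2 : Rˣ →* Rˣ).ker ⊓ congruenceUnits (2 * P) = ⊥ := by
  rw [eq_bot_iff]
  rintro u ⟨hu, hu'⟩
  obtain ⟨r, hr⟩ := mem_congruenceUnits.1 hu'
  obtain ⟨v, -, hv⟩ := exists_mem_congruenceUnits hP dvd_rfl r
  have hu : (u : R) ^ 2 = 1 := congrArg Units.val hu
  refine Units.ext ((sq_eq_one_iff.1 hu).resolve_right fun h => ?_)
  have two_mul_v : 2 * (v : R) = 0 := by linear_combination 2 * hv - hr + h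
  exact (mul_ne_zero h2 v.ne_zero) two_mul_v

theorem index_range_sq_units (h2 : (2 : R) ≠ 0) (P : R) [HenselianRing R (Ideal.span {P})]
    [Finite (R ⧸ Ideal.span {2 * P})] (hP0 : P ≠ 0) :
    (powMonoidHom 2 : Rˣ →* Rˣ).range.index = 2 * Nat.card (R ⧸ Ideal.span {(2 : R)}) := by
  have hP : Ideal.span {P} ≤ Ideal.jacobson ⊥ := HenselianRing.jac
  have := finiteIndex_congruenceUnits (2 * P)
  have map_eq := map_powMonoidHom_congruenceUnits P
  have map_le : (congruenceUnits (2 * P)).map (powMonoidHom 2) ≤ congruenceUnits (2 * P) := by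
    rw [map_eq]
    intro u hu
    exact mem_congruenceUnits.2 ((dvd_mul_right _ _).trans (mem_congruenceUnits.1 hu))
  rw [index_range_eq_card_ker_mul_relIndex _ _ map_le (ker_inf_congruenceUnits h2 hP), map_eq,
    card_ker_powMonoidHom_two h2, relIndex_congruenceUnits hP (dvd_mul_left P 2)
      (dvd_mul_right 2 P) (mul_ne_zero h2 hP0)]

end CongruenceUnits

open IsDedekindDomain.HeightOneSpectrum in
theorem index_range_powMonoidHom_fractionField (R K : Type*) [CommRing R] [IsDomain R]
    [IsDiscreteValuationRing R] [Field K] [Algebra R K] [IsFractionRing R K]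
    {k : ℕ} (hk : k ≠ 0) :
    (powMonoidHom k : Kˣ →* Kˣ).range.index = k * (powMonoidHom k : Rˣ →* Rˣ).range.index := by
  let v := IsDiscreteValuationRing.maximalIdeal R
  have le_one {x : Kˣ} (hx : v.valuationOfNeZero x = 1) : v.valuation K x ≤ 1 := by
    rw [← v.valuationOfNeZero_eq, hx]; rfl
  refine index_range_powMonoidHom_of_exact (Units.map (algebraMap R K).toMonoidHom)
    v.valuationOfNeZero (Units.map_injective (IsFractionRing.injective R K)) ?_ ?_ hk
  · obtain ⟨π, hπ⟩ := v.valuation_exists_uniformizer K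
    have hπ0 : π ≠ 0 := by
      rintro rfl
      exact WithZero.zero_ne_coe (by rwa [map_zero] at hπ)
    have hvπ : v.valuationOfNeZero (Units.mk0 π hπ0) = Multiplicative.ofAdd (-1) :=
      WithZero.coe_injective (by rw [v.valuationOfNeZero_eq]; exact hπ)
    intro m
    refine ⟨Units.mk0 π hπ0 ^ (-m.toAdd), ?_⟩
    rw [map_zpow, hvπ, ← ofAdd_zsmul]
    simp
  · ext x
    constructor
    · rintro ⟨u, rfl⟩
      exact v.valuation_of_unit_eq u
    · intro hx
      obtain ⟨r, hr⟩ := IsDiscreteValuationRing.exists_lift_of_le_one (le_one hx)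
      obtain ⟨s, hs⟩ := IsDiscreteValuationRing.exists_lift_of_le_one
        (le_one (x := x⁻¹) (by rw [map_inv, hx, inv_one]))
      have hrs : r * s = 1 := IsFractionRing.injective R K (by
        rw [map_mul, hr, hs, Units.mul_inv, map_one])
      exact ⟨Units.mkOfMulEqOne r s hrs, Units.ext hr⟩

section AdicCompleteness

open AdicCompletion

variable {R : Type*} [CommRing R] {I : Ideal R}

theorem isAdicComplete_of_linearEquiv {M N : Type*} [AddCommGroup M] [Module R M]
    [AddCommGroup N] [Module R N] (e : M ≃ₗ[R] N) [IsAdicComplete I M] : IsAdicComplete I N := by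
  have of_eq : (of I N : N → _) = AdicCompletion.congr I e ∘ of I M ∘ e.symm := by
    ext1 x
    rw [Function.comp_apply, Function.comp_apply, congr_apply, map_of, LinearEquiv.coe_coe,
      e.apply_symm_apply]
  rw [← of_bijective_iff, of_eq]
  exact (AdicCompletion.congr I e).bijective.comp ((of_bijective I M).comp e.symm.bijective)

theorem isAdicComplete_pi {ι : Type*} [Finite ι] (M : ι → Type*) [∀ i, AddCommGroup (M i)]
    [∀ i, Module R (M i)] [∀ i, IsAdicComplete I (M i)] : IsAdicComplete I (∀ i, M i) := by
  classical
  have := Fintype.ofFinite ι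
  have of_eq : (piEquivOfFintype I M : _ → _) ∘ of I (∀ i, M i) = Pi.map fun i => of I (M i) := by
    ext1 x
    rw [Function.comp_apply, piEquivOfFintype_apply]
    rfl
  rw [← of_bijective_iff, ← (piEquivOfFintype I M).bijective.of_comp_iff', of_eq]
  exact .piMap fun i => of_bijective I (M i)

theorem isAdicComplete_of_free_finite (M : Type*) [AddCommGroup M] [Module R M] [Module.Free R M]
    [Module.Finite R M] [IsAdicComplete I R] : IsAdicComplete I M :=
  have := isAdicComplete_pi (I := I) fun _ : Module.Free.ChooseBasisIndex R M => R
  isAdicComplete_of_linearEquiv (Module.Free.chooseBasis R M).equivFun.symm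

theorem henselianRing_span_algebraMap (S : Type*) [CommRing S] [Algebra R S] [Module.Free R S]
    [Module.Finite R S] (a : R) [IsAdicComplete (Ideal.span {a}) R] :
    HenselianRing S (Ideal.span {algebraMap R S a}) := by
  have := isAdicComplete_of_free_finite (I := Ideal.span {a}) S
  have : IsAdicComplete (Ideal.span {algebraMap R S a}) S := by
    rwa [← Set.image_singleton, ← Ideal.map_span, IsAdicComplete.map_algebraMap_iff]
  infer_instance

theorem card_quotient_span_algebraMap (S : Type*) [CommRing S] [Algebra R S] [Module.Free R S]
    [Module.Finite R S] [StrongRankCondition R] (a : R) :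
    Nat.card (S ⧸ Ideal.span {algebraMap R S a}) =
      Nat.card (R ⧸ Ideal.span {a}) ^ Module.finrank R S := by
  let b := (Module.finBasis R S).baseChange (R ⧸ Ideal.span {a})
  rw [← Set.image_singleton, ← Ideal.map_span,
    Nat.card_congr (Algebra.TensorProduct.quotIdealMapEquivTensorQuot S (Ideal.span {a})).toEquiv,
    Nat.card_congr (TensorProduct.comm R _ _).toEquiv, Nat.card_congr b.equivFun.toEquiv,
    Nat.card_fun, Nat.card_fin]

end AdicCompleteness

section PadicIntegers

open Polynomial

variable (p : ℕ) [Fact p.Prime]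

theorem finite_padicInt_quotient_span {a : ℤ_[p]} (ha : a ≠ 0) :
    Finite (ℤ_[p] ⧸ Ideal.span {a}) := by
  obtain ⟨n, hn⟩ := PadicInt.ideal_eq_span_pow_p (s := Ideal.span {a}) (by simpa using ha)
  have : NeZero (p ^ n) := ⟨pow_ne_zero _ (Fact.out : p.Prime).ne_zero⟩
  rw [hn, ← PadicInt.ker_toZModPow]
  exact Finite.of_injective _ (RingHom.kerLift_injective (PadicInt.toZModPow n))

variable (K : Type*) [Field K] [Algebra ℚ_[p] K] [FiniteDimensional ℚ_[p] K]
  [Algebra ℤ_[p] K] [IsScalarTower ℤ_[p] ℚ_[p] K]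

theorem mem_integralClosure_padicInt_iff (x : K) :
    x ∈ integralClosure ℤ_[p] K ↔ spectralNorm ℚ_[p] K x ≤ 1 := by
  have hx : IsIntegral ℚ_[p] x := Algebra.IsIntegral.isIntegral x
  rw [mem_integralClosure_iff, spectralNorm, spectralValue_le_one_iff (minpoly.monic hx)]
  constructor
  · intro h n
    rw [minpoly.isIntegrallyClosed_eq_field_fractions' ℚ_[p] h, coeff_map]
    exact PadicInt.norm_le_one _
  · intro h
    have minpoly_lifts : minpoly ℚ_[p] x ∈ lifts (algebraMap ℤ_[p] ℚ_[p]) :=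
      (lifts_iff_coeff_lifts _).2 fun n => ⟨⟨_, h n⟩, rfl⟩
    obtain ⟨q, hq, -, hq_monic⟩ := lifts_and_degree_eq_and_monic minpoly_lifts (minpoly.monic hx)
    refine ⟨q, hq_monic, ?_⟩
    rw [← aeval_def, ← aeval_map_algebraMap ℚ_[p], hq, minpoly.aeval]

theorem isFractionRing_integralClosure_padicInt : IsFractionRing (integralClosure ℤ_[p] K) K :=
  integralClosure.isFractionRing_of_finite_extension ℚ_[p] K

theorem valuationRing_integralClosure_padicInt : ValuationRing (integralClosure ℤ_[p] K) := by
  have := isFractionRing_integralClosure_padicInt p K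
  rw [ValuationRing.iff_isInteger_or_isInteger _ K]
  intro x
  have isInteger {y : K} (hy : spectralNorm ℚ_[p] K y ≤ 1) :
      IsLocalization.IsInteger (integralClosure ℤ_[p] K) y :=
    ⟨⟨y, (mem_integralClosure_padicInt_iff p K y).2 hy⟩, rfl⟩
  rcases le_or_gt (spectralNorm ℚ_[p] K x) 1 with hx | hx
  · exact .inl (isInteger hx)
  · have spectralNorm_inv : spectralNorm ℚ_[p] K x⁻¹ = (spectralNorm ℚ_[p] K x)⁻¹ :=
      map_inv₀ (spectralMulAlgNorm ℚ_[p] K) x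
    exact .inr (isInteger (spectralNorm_inv ▸ inv_le_one_of_one_le₀ hx.le))

theorem free_integralClosure_padicInt : Module.Free ℤ_[p] (integralClosure ℤ_[p] K) := by
  have : Module.IsTorsionFree ℤ_[p] K := .trans_faithfulSMul ℤ_[p] ℚ_[p] K
  exact IsIntegralClosure.module_free ℤ_[p] ℚ_[p] K _

instance : Module.Finite ℤ_[p] (integralClosure ℤ_[p] K) :=
  IsIntegralClosure.finite ℤ_[p] ℚ_[p] K _

theorem isDiscreteValuationRing_integralClosure_padicInt :
    IsDiscreteValuationRing (integralClosure ℤ_[p] K) := by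
  have := valuationRing_integralClosure_padicInt p K
  have : IsDedekindDomain (integralClosure ℤ_[p] K) :=
    integralClosure.isDedekindDomain ℤ_[p] ℚ_[p] K
  have := free_integralClosure_padicInt p K
  refine { not_a_field' := ?_ }
  rw [Ne, ← IsLocalRing.isField_iff_maximalIdeal_eq]
  exact fun h => IsDiscreteValuationRing.not_isField ℤ_[p]
    (isField_of_isIntegral_of_isField (FaithfulSMul.algebraMap_injective _ _) h)

theorem henselianRing_integralClosure_padicInt :
    HenselianRing (integralClosure ℤ_[p] K)
      (Ideal.span {algebraMap ℤ_[p] (integralClosure ℤ_[p] K) p}) := by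
  have := free_integralClosure_padicInt p K
  have : IsAdicComplete (Ideal.span {(p : ℤ_[p])}) ℤ_[p] := by
    rw [← PadicInt.maximalIdeal_eq_span_p]
    infer_instance
  exact henselianRing_span_algebraMap _ _

theorem card_integralClosure_padicInt_quotient (a : ℤ_[p]) :
    Nat.card (integralClosure ℤ_[p] K ⧸
      Ideal.span {algebraMap ℤ_[p] (integralClosure ℤ_[p] K) a}) =
      Nat.card (ℤ_[p] ⧸ Ideal.span {a}) ^ Module.finrank ℚ_[p] K := by
  have := free_integralClosure_padicInt p K
  have : Module.IsTorsionFree ℤ_[p] K := .trans_faithfulSMul ℤ_[p] ℚ_[p] K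
  rw [card_quotient_span_algebraMap, IsIntegralClosure.rank ℤ_[p] ℚ_[p] K]

theorem index_range_sq_integralClosure_padicInt :
    (powMonoidHom 2 : Kˣ →* Kˣ).range.index =
      4 * Nat.card (ℤ_[p] ⧸ Ideal.span {(2 : ℤ_[p])}) ^ Module.finrank ℚ_[p] K := by
  have := isDiscreteValuationRing_integralClosure_padicInt p K
  have := isFractionRing_integralClosure_padicInt p K
  have := free_integralClosure_padicInt p K
  have := henselianRing_integralClosure_padicInt p K
  set R := integralClosure ℤ_[p] K
  have algebraMap_injective : Function.Injective (algebraMap ℤ_[p] R) :=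
    FaithfulSMul.algebraMap_injective _ _
  have p_ne_zero : (p : ℤ_[p]) ≠ 0 := PadicInt.prime_p.ne_zero
  have two_ne_zero : (2 : ℤ_[p]) ≠ 0 := _root_.two_ne_zero
  have finite_quotient : Finite (R ⧸ Ideal.span {2 * algebraMap ℤ_[p] R p}) := by
    have := finite_padicInt_quotient_span p (mul_ne_zero two_ne_zero p_ne_zero)
    have card_ne_zero := card_integralClosure_padicInt_quotient p K (2 * p)
    rw [map_mul, map_ofNat] at card_ne_zero
    exact Nat.finite_of_card_ne_zero (card_ne_zero ▸ pow_ne_zero _ Nat.card_pos.ne')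
  have two_ne_zero' : (2 : R) ≠ 0 := by
    rw [← map_ofNat (algebraMap ℤ_[p] R) 2]
    exact (map_ne_zero_iff _ algebraMap_injective).2 two_ne_zero
  have index_units := index_range_sq_units two_ne_zero' _
    ((map_ne_zero_iff _ algebraMap_injective).2 p_ne_zero)
  have card_two := card_integralClosure_padicInt_quotient p K 2
  rw [map_ofNat] at card_two
  rw [index_range_powMonoidHom_fractionField R K _root_.two_ne_zero, index_units, card_two]
  ring

end PadicIntegers

theorem index_range_sq (p : ℕ) [Fact p.Prime] (K : Type*) [Field K] [Algebra ℚ_[p] K]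
    [FiniteDimensional ℚ_[p] K] : (powMonoidHom 2 : Kˣ →* Kˣ).range.index =
      4 * Nat.card (ℤ_[p] ⧸ Ideal.span {(2 : ℤ_[p])}) ^ Module.finrank ℚ_[p] K := by
  let : Algebra ℤ_[p] K := ((algebraMap ℚ_[p] K).comp (algebraMap ℤ_[p] ℚ_[p])).toAlgebra
  have : IsScalarTower ℤ_[p] ℚ_[p] K := .of_algebraMap_eq fun _ => rfl
  exact index_range_sq_integralClosure_padicInt p K

/-! ### Norm groups -/

section NormGroup

variable {F : Type*} [Field F]

/-- The group of nonzero values of the norm form `x² - α y²` of `F[√α]`. -/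
def normGroup (α : F) : Subgroup Fˣ where
  carrier := {u | ∃ x y : F, (u : F) = x * x - α * (y * y)}
  one_mem' := ⟨1, 0, by simp⟩
  mul_mem' := by
    rintro u v ⟨x, y, hu⟩ ⟨z, w, hv⟩
    exact ⟨x * z + α * y * w, x * w + y * z, by push_cast; rw [hu, hv]; ring⟩
  inv_mem' := by
    rintro u ⟨x, y, hu⟩
    refine ⟨x * (u : F)⁻¹, y * (u : F)⁻¹, ?_⟩
    have := u.ne_zero
    rw [Units.val_inv_eq_inv_val]
    field_simp
    linear_combination hu

theorem mem_range_sq_iff {u : Fˣ} :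
    u ∈ (powMonoidHom 2 : Fˣ →* Fˣ).range ↔ IsSquare (u : F) := by
  constructor
  · rintro ⟨v, rfl⟩
    exact ⟨v, by rw [powMonoidHom_apply, Units.val_pow_eq_pow_val, sq]⟩
  · rintro ⟨x, hx⟩
    have hx0 : x ≠ 0 := by
      rintro rfl
      exact u.ne_zero (by rw [hx, zero_mul])
    exact ⟨Units.mk0 x hx0, Units.ext (by simp [hx, sq])⟩

theorem range_sq_le_normGroup (α : F) : (powMonoidHom 2 : Fˣ →* Fˣ).range ≤ normGroup α := by
  intro u hu
  obtain ⟨x, hx⟩ := mem_range_sq_iff.1 hu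
  exact ⟨x, 0, by rw [hx]; ring⟩

section QuadraticExtension

open QuadraticAlgebra

variable {α : F}

local notation "L" => QuadraticAlgebra F α 0

/-- The inclusion of `Fˣ` into the units of `F[√α]`. -/
abbrev unitsIncl : Fˣ →* (L)ˣ := Units.map (algebraMap F L).toMonoidHom

/-- The norm from the units of `F[√α]` to `Fˣ`. -/
abbrev unitsNorm : (L)ˣ →* Fˣ := Units.map (QuadraticAlgebra.norm (R := F) (a := α) (b := 0))

theorem coe_unitsNorm (z : (L)ˣ) :
    (unitsNorm z : F) = (z : L).re * (z : L).re - α * ((z : L).im * (z : L).im) := by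
  rw [Units.coe_map, QuadraticAlgebra.norm_def]
  ring

theorem unitsNorm_unitsIncl (u : Fˣ) : unitsNorm (unitsIncl (α := α) u) = u ^ 2 := by
  ext
  rw [coe_unitsNorm, Units.coe_map]
  simp [sq]

theorem omega_sq : (ω : L) ^ 2 = algebraMap F L α := by
  ext <;> simp [sq]

variable [Fact (∀ r, r ^ 2 ≠ α + 0 * r)]

theorem range_unitsNorm : (unitsNorm (α := α)).range = normGroup α := by
  ext u
  constructor
  · rintro ⟨z, rfl⟩
    exact ⟨_, _, coe_unitsNorm z⟩
  · rintro ⟨x, y, hu⟩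
    have hz : (⟨x, y⟩ : L) ≠ 0 := by
      intro h
      obtain ⟨rfl, rfl⟩ : x = 0 ∧ y = 0 := QuadraticAlgebra.ext_iff.1 h
      exact u.ne_zero (by rw [hu]; ring)
    exact ⟨Units.mk0 _ hz, Units.ext (by rw [coe_unitsNorm, hu]; rfl)⟩

/- An element `w ≠ -1` of norm one is `(1 + w)² / N(1 + w)`. -/
theorem mem_sup_of_unitsNorm_eq_one {w : (L)ˣ} (hw : unitsNorm w = 1) :
    w ∈ unitsIncl.range ⊔ (powMonoidHom 2).range := by
  by_cases hw1 : (w : L) = -1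
  · exact (le_sup_left : unitsIncl.range ≤ _) ⟨-1, Units.ext (by simp [hw1])⟩
  have hv0 : 1 + (w : L) ≠ 0 := fun h => hw1 (by linear_combination h)
  let v : (L)ˣ := Units.mk0 _ hv0
  have re_v : (v : L).re = 1 + (w : L).re := by simp [v]
  have im_v : (v : L).im = (w : L).im := by simp [v]
  have norm_w : 1 = (w : L).re * (w : L).re - α * ((w : L).im * (w : L).im) := by
    rw [← coe_unitsNorm, hw, Units.val_one]
  have w_mul_norm : w * unitsIncl (unitsNorm v) = v ^ 2 := by
    have coe_norm : ((unitsIncl (α := α) (unitsNorm v) : (L)ˣ) : L) =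
        algebraMap F L ((1 + (w : L).re) * (1 + (w : L).re) - α * ((w : L).im * (w : L).im)) := by
      rw [← re_v, ← im_v, ← coe_unitsNorm]
      rfl
    ext
    all_goals
      rw [Units.val_mul, coe_norm, sq, Units.val_mul]
      simp only [re_mul, im_mul, algebraMap_re, algebraMap_im, re_v, im_v]
    · linear_combination -(1 + (w : L).re) * norm_w
    · linear_combination -(w : L).im * norm_w
  have : w = unitsIncl (unitsNorm v)⁻¹ * v ^ 2 := by
    rw [← w_mul_norm, map_inv, mul_comm w, inv_mul_cancel_left]
  rw [this]
  exact Subgroup.mul_mem_sup ⟨_, rfl⟩ ⟨v, rfl⟩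

theorem comap_unitsNorm_range_sq :
    (powMonoidHom 2 : Fˣ →* Fˣ).range.comap (unitsNorm (α := α)) =
      unitsIncl.range ⊔ (powMonoidHom 2 : (L)ˣ →* (L)ˣ).range := by
  apply le_antisymm
  · rintro z ⟨u, hu⟩
    have norm_eq_one : unitsNorm (z * (unitsIncl u)⁻¹) = 1 := by
      rw [map_mul, map_inv, unitsNorm_unitsIncl, mul_inv_eq_one]
      exact hu.symm
    rw [← inv_mul_cancel_right z (unitsIncl u)]
    exact mul_mem (mem_sup_of_unitsNorm_eq_one norm_eq_one)
      ((le_sup_left : unitsIncl.range ≤ _) ⟨u, rfl⟩)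
  · refine sup_le ?_ ?_
    · rintro _ ⟨u, rfl⟩
      exact ⟨u, (unitsNorm_unitsIncl u).symm⟩
    · rintro _ ⟨z, rfl⟩
      exact ⟨unitsNorm z, by simp⟩

theorem isSquare_algebraMap_iff (h2 : (2 : F) ≠ 0) (a : F) :
    IsSquare (algebraMap F L a) ↔ IsSquare a ∨ ∃ y, a = α * (y * y) := by
  constructor
  · rintro ⟨z, hz⟩
    obtain ⟨hre, him⟩ := QuadraticAlgebra.ext_iff.1 hz
    rw [algebraMap_re, re_mul] at hre
    rw [algebraMap_im, im_mul] at him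
    have : z.re * z.im = 0 := mul_left_cancel₀ h2 (by linear_combination -him)
    rcases mul_eq_zero.1 this with h | h
    · exact .inr ⟨z.im, by rw [hre, h]; ring⟩
    · exact .inl ⟨z.re, by rw [hre, h]; ring⟩
  · rintro (⟨x, rfl⟩ | ⟨y, rfl⟩)
    · exact (IsSquare.mul_self x).map _
    · rw [map_mul, ← omega_sq]
      exact (IsSquare.sq _).mul ((IsSquare.mul_self y).map _)

theorem not_isSquare_of_fact : ¬IsSquare α := by
  rintro ⟨x, hx⟩
  exact Fact.out (p := ∀ r, r ^ 2 ≠ α + 0 * r) x (by rw [hx]; ring)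

theorem relIndex_range_sq_comap_unitsIncl (h2 : (2 : F) ≠ 0) :
    (powMonoidHom 2 : Fˣ →* Fˣ).range.relIndex
      ((powMonoidHom 2 : (L)ˣ →* (L)ˣ).range.comap unitsIncl) = 2 := by
  have hα : ¬IsSquare α := not_isSquare_of_fact
  have hα0 : α ≠ 0 := by rintro rfl; exact hα (.zero)
  have mem_comap (u : Fˣ) : u ∈ (powMonoidHom 2 : (L)ˣ →* (L)ˣ).range.comap unitsIncl ↔
      IsSquare (u : F) ∨ ∃ y, (u : F) = α * (y * y) := by
    rw [← isSquare_algebraMap_iff h2, Subgroup.mem_comap, mem_range_sq_iff]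
    rfl
  rw [Subgroup.relIndex_eq_two_iff]
  refine ⟨Units.mk0 α hα0, (mem_comap _).2 (.inr ⟨1, by simp⟩), fun u hu => ?_⟩
  rw [mem_range_sq_iff, mem_range_sq_iff, Units.val_mul, Units.val_mk0]
  have not_both : ¬(IsSquare ((u : F) * α) ∧ IsSquare (u : F)) := fun ⟨h, h'⟩ => hα (by
    simpa [mul_div_cancel_left₀] using h.div h')
  rcases (mem_comap u).1 hu with h | ⟨y, hy⟩
  · exact .inr ⟨h, fun h' => not_both ⟨h', h⟩⟩
  · have h : IsSquare ((u : F) * α) := ⟨α * y, by rw [hy]; ring⟩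
    exact .inl ⟨h, fun h' => not_both ⟨h, h'⟩⟩

/- With `S = Fˣ²` and `T = Lˣ²`: `[Lˣ : T] = [Fˣ : Fˣ ∩ T] [N(Lˣ) : S]`, while `Fˣ ∩ T` contains
`S` with index two. -/
theorem two_mul_index_range_sq_mul_index_normGroup (h2 : (2 : F) ≠ 0) :
    2 * (powMonoidHom 2 : (L)ˣ →* (L)ˣ).range.index * (normGroup α).index =
      (powMonoidHom 2 : Fˣ →* Fˣ).range.index ^ 2 := by
  set S := (powMonoidHom 2 : Fˣ →* Fˣ).range
  set T := (powMonoidHom 2 : (L)ˣ →* (L)ˣ).range with hT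
  have index_T : (T.comap unitsIncl).index * S.relIndex (normGroup α) = T.index := by
    rw [← Subgroup.relIndex_mul_index (le_sup_right : T ≤ unitsIncl.range ⊔ T),
      Subgroup.relIndex_sup_right, ← Subgroup.index_comap, hT, ← comap_unitsNorm_range_sq,
      Subgroup.index_comap _ unitsNorm, range_unitsNorm]
  have index_S : S.relIndex (normGroup α) * (normGroup α).index = S.index :=
    Subgroup.relIndex_mul_index (range_sq_le_normGroup α)
  have le_comap : S ≤ T.comap unitsIncl := by
    rintro _ ⟨u, rfl⟩
    exact ⟨unitsIncl (α := α) u, by simp⟩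
  have index_S' : 2 * (T.comap unitsIncl).index = S.index := by
    rw [← relIndex_range_sq_comap_unitsIncl (α := α) h2]
    exact Subgroup.relIndex_mul_index le_comap
  rw [← index_T, sq]
  nth_rw 1 [← index_S, ← index_S']
  ring

end QuadraticExtension
end NormGroup

theorem index_normGroup (p : ℕ) [Fact p.Prime] {F : Type*} [Field F] [Algebra ℚ_[p] F]
    [FiniteDimensional ℚ_[p] F] {α : F} (hα : ¬IsSquare α) : (normGroup α).index = 2 := by
  have : CharZero F := charZero_of_injective_algebraMap (algebraMap ℚ_[p] F).injective
  have : Fact (∀ r, r ^ 2 ≠ α + 0 * r) := ⟨fun r h => hα ⟨r, by rw [← sq, h]; ring⟩⟩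
  have : FiniteDimensional ℚ_[p] (QuadraticAlgebra F α 0) := .trans ℚ_[p] F _
  have finrank_eq : Module.finrank ℚ_[p] (QuadraticAlgebra F α 0) =
      Module.finrank ℚ_[p] F * 2 := by
    rw [← Module.finrank_mul_finrank ℚ_[p] F, QuadraticAlgebra.finrank_eq_two]
  have index_mul := two_mul_index_range_sq_mul_index_normGroup (α := α) two_ne_zero
  rw [index_range_sq p F, index_range_sq p (QuadraticAlgebra F α 0), finrank_eq, pow_mul]
    at index_mul
  have := finite_padicInt_quotient_span p (two_ne_zero (α := ℤ_[p]))
  have card_pos : 0 < Nat.card (ℤ_[p] ⧸ Ideal.span {(2 : ℤ_[p])}) ^ Module.finrank ℚ_[p] F :=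
    pow_pos Nat.card_pos _
  refine Nat.eq_of_mul_eq_mul_left (pow_pos card_pos 2) ?_
  linarith

theorem exists_forall_mul_notMem {G : Type*} [Group G] (H : Subgroup G) (s : Finset G)
    (hs : s.card < H.index) : ∃ u, ∀ g ∈ s, g * u ∉ H := by
  classical
  obtain ⟨q, hq⟩ : ∃ q : G ⧸ H, q ∉ s.image fun g => ((g⁻¹ : G) : G ⧸ H) := by
    by_contra! h
    have univ_eq : (s.image fun g => ((g⁻¹ : G) : G ⧸ H) : Set (G ⧸ H)) = Set.univ :=
      Set.eq_univ_of_forall h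
    have card_eq : H.index = (s.image fun g => ((g⁻¹ : G) : G ⧸ H)).card := by
      rw [← Set.ncard_coe_finset, univ_eq, Set.ncard_univ, Subgroup.index]
    exact hs.not_ge (card_eq ▸ Finset.card_image_le)
  obtain ⟨u, rfl⟩ := QuotientGroup.mk_surjective q
  refine ⟨u, fun g hg hgu => hq (Finset.mem_image.2 ⟨g, hg, QuotientGroup.eq.2 ?_⟩)⟩
  rwa [inv_inv]

section QuadraticallyLocal

variable {F : Type*} [Field F]

/-- The properties of a nonarchimedean local field of characteristic zero on which the
classification of its quadratic forms rests: norm groups of quadratic extensions have index two,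
and there are at least four (and, an infinite `Subgroup.index` being `0`, finitely many) square
classes. -/
structure IsQuadraticallyLocal (F : Type*) [Field F] : Prop where
  two_ne_zero : (2 : F) ≠ 0
  index_normGroup {α : F} : ¬IsSquare α → (normGroup α).index = 2
  four_le_index : 4 ≤ (powMonoidHom 2 : Fˣ →* Fˣ).range.index

theorem exists_binary_eq (h2 : (2 : F) ≠ 0) {a b : F} (ha : a ≠ 0) (hb : b ≠ 0)
    (hab : IsSquare (-(a * b))) (e : F) : ∃ x y, a * (x * x) + b * (y * y) = e := by
  obtain ⟨s, hs⟩ := hab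
  have hs0 : s ≠ 0 := by
    rintro rfl
    exact mul_ne_zero ha hb (by linear_combination -hs)
  obtain rfl : b = -(s * s) / a := by
    field_simp
    linear_combination -hs
  refine ⟨(1 + e / a) / 2, (1 - e / a) / 2 * (a / s), ?_⟩
  field_simp
  ring

theorem normGroup_eq_top (h2 : (2 : F) ≠ 0) {α : F} (hα0 : α ≠ 0) (hα : IsSquare α) :
    normGroup α = ⊤ := by
  rw [eq_top_iff]
  intro u _
  obtain ⟨x, y, h⟩ := exists_binary_eq h2 one_ne_zero (neg_ne_zero.2 hα0) (by simpa using hα) u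
  exact ⟨x, y, by rw [← h]; ring⟩

theorem mem_normGroup_of_mem (h2 : (2 : F) ≠ 0) {α β : Fˣ} (h : β ∈ normGroup (α : F)) :
    α ∈ normGroup (β : F) := by
  obtain ⟨x, y, hβ⟩ := h
  by_cases hy : y = 0
  · rw [normGroup_eq_top h2 β.ne_zero ⟨x, by rw [hβ, hy]; ring⟩]
    trivial
  · refine ⟨x / y, 1 / y, ?_⟩
    rw [hβ]
    field_simp
    ring

theorem mem_normGroup_comm (h2 : (2 : F) ≠ 0) {α β : Fˣ} :
    β ∈ normGroup (α : F) ↔ α ∈ normGroup (β : F) :=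
  ⟨mem_normGroup_of_mem h2, mem_normGroup_of_mem h2⟩

variable (hF : IsQuadraticallyLocal F)
include hF

theorem mul_mem_normGroup_of_notMem {α : F} (hα0 : α ≠ 0) {u v : Fˣ} (hu : u ∉ normGroup α)
    (hv : v ∉ normGroup α) : u * v ∈ normGroup α := by
  by_cases hα : IsSquare α
  · rw [normGroup_eq_top hF.two_ne_zero hα0 hα]
    trivial
  · exact (Subgroup.mul_mem_iff_of_index_two (hF.index_normGroup hα)).2 (iff_of_false hu hv)

theorem isSquare_mul_of_normGroup_eq {α β : Fˣ} (h : normGroup (α : F) = normGroup (β : F)) :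
    IsSquare ((α : F) * β) := by
  by_contra hαβ
  have index_eq := hF.index_normGroup hαβ
  suffices normGroup ((α : F) * β) = ⊤ by
    rw [this, Subgroup.index_top] at index_eq
    omega
  rw [eq_top_iff]
  intro u _
  rw [← Units.val_mul, mem_normGroup_comm hF.two_ne_zero]
  have α_mem_iff : α ∈ normGroup (u : F) ↔ β ∈ normGroup (u : F) := by
    rw [mem_normGroup_comm hF.two_ne_zero, mem_normGroup_comm hF.two_ne_zero (α := u), h]
  by_cases hβ : β ∈ normGroup (u : F)
  · exact mul_mem (α_mem_iff.2 hβ) hβ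
  · exact mul_mem_normGroup_of_notMem hF u.ne_zero (mt α_mem_iff.1 hβ) hβ

theorem normGroup_sup_eq_top {α β : Fˣ} (hα : ¬IsSquare (α : F)) (hβ : ¬IsSquare (β : F))
    (hαβ : ¬IsSquare ((α : F) * β)) : normGroup (α : F) ⊔ normGroup (β : F) = ⊤ := by
  have eq_sup {H : Subgroup Fˣ} (hH : H.index = 2)
      (hle : H ≤ normGroup (α : F) ⊔ normGroup (β : F))
      (hne : normGroup (α : F) ⊔ normGroup (β : F) ≠ ⊤) :
      H = normGroup (α : F) ⊔ normGroup (β : F) := by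
    have index_mul := Subgroup.relIndex_mul_index hle
    have index_dvd := hH ▸ Subgroup.index_dvd_of_le hle
    have index_sup := ((Nat.dvd_prime Nat.prime_two).1 index_dvd).resolve_left
      (mt Subgroup.index_eq_one.1 hne)
    rw [index_sup, hH] at index_mul
    exact le_antisymm hle (Subgroup.relIndex_eq_one.1 (by omega))
  by_contra hne
  exact hαβ (isSquare_mul_of_normGroup_eq hF
    ((eq_sup (hF.index_normGroup hα) le_sup_left hne).trans
      (eq_sup (hF.index_normGroup hβ) le_sup_right hne).symm))

theorem exists_mem_normGroup_mul_eq {α β a b : F} (hα : ¬IsSquare α) (hβ : ¬IsSquare β)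
    (hαβ : ¬IsSquare (α * β)) (ha : a ≠ 0) (hb : b ≠ 0) :
    ∃ u ∈ normGroup α, ∃ v ∈ normGroup β, a * u = b * v := by
  have ne_zero {γ : F} (hγ : ¬IsSquare γ) : γ ≠ 0 := by
    rintro rfl
    exact hγ .zero
  have sup_eq_top : normGroup α ⊔ normGroup β = ⊤ :=
    normGroup_sup_eq_top hF (α := .mk0 α (ne_zero hα)) (β := .mk0 β (ne_zero hβ)) hα hβ hαβ
  obtain ⟨u, hu, v, hv, huv⟩ := Subgroup.mem_sup.1
    (sup_eq_top ▸ Subgroup.mem_top (Units.mk0 (b / a) (div_ne_zero hb ha)))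
  have huv : (u : F) * v = b / a := congrArg Units.val huv
  refine ⟨u, hu, v⁻¹, inv_mem hv, ?_⟩
  have := v.ne_zero
  rw [Units.val_inv_eq_inv_val]
  field_simp at huv ⊢
  linear_combination huv

/- The forms `⟨a, b⟩` and `⟨e, -c⟩` have a common nonzero value, because the norm groups of
`-ab` and `ec` generate `Fˣ`; hence `⟨a, b, c⟩` represents `e` times a square. -/
theorem exists_ternary_eq {a b c e : F} (ha : a ≠ 0) (hb : b ≠ 0) (hc : c ≠ 0) (he : e ≠ 0)
    (habc : ¬IsSquare (-(a * b * c) * e)) :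
    ∃ x y z, a * (x * x) + (b * (y * y) + c * (z * z)) = e := by
  have h2 := hF.two_ne_zero
  by_cases hec : IsSquare (e * c)
  · obtain ⟨s, hs⟩ := hec
    refine ⟨0, 0, s / c, ?_⟩
    field_simp
    linear_combination -hs
  by_cases hab : IsSquare (-(a * b))
  · obtain ⟨x, y, hxy⟩ := exists_binary_eq h2 ha hb hab e
    exact ⟨x, y, 0, by rw [← hxy]; ring⟩
  obtain ⟨u, ⟨x, y, hxy⟩, v, ⟨z, w, hzw⟩, huv⟩ :=
    exists_mem_normGroup_mul_eq hF hab hec (by convert habc using 2; ring) ha he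
  have common_value :
      a * (x * x) + b * (a * y * (a * y)) = e * (z * z) - c * (e * w * (e * w)) := by
    linear_combination huv - a * hxy + e * hzw
  by_cases hz : z = 0
  · have hw : w ≠ 0 := by
      rintro rfl
      exact v.ne_zero (by rw [hzw, hz]; ring)
    obtain ⟨r, t, hrt⟩ := exists_binary_eq h2 (neg_ne_zero.2 hc) hc ⟨c, by ring⟩ e
    rw [hz] at common_value
    refine ⟨x * (r / (e * w)), a * y * (r / (e * w)), t, ?_⟩
    field_simp
    linear_combination r ^ 2 * common_value + (e * w) ^ 2 * hrt
  · refine ⟨x / z, a * y / z, e * w / z, ?_⟩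
    field_simp
    linear_combination common_value

theorem exists_forall_not_isSquare_mul {a b c : F} (ha : a ≠ 0) (hb : b ≠ 0) (hc : c ≠ 0) :
    ∃ e ≠ 0, ¬IsSquare (a * e) ∧ ¬IsSquare (b * e) ∧ ¬IsSquare (c * e) := by
  classical
  obtain ⟨u, hu⟩ := exists_forall_mul_notMem (powMonoidHom 2 : Fˣ →* Fˣ).range
    {Units.mk0 a ha, Units.mk0 b hb, Units.mk0 c hc}
    (Finset.card_le_three.trans_lt hF.four_le_index)
  have not_isSquare {d : F} (hd : d ≠ 0)
      (h : Units.mk0 d hd * u ∉ (powMonoidHom 2 : Fˣ →* Fˣ).range) : ¬IsSquare (d * u) := by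
    rwa [mem_range_sq_iff] at h
  exact ⟨u, u.ne_zero, not_isSquare ha (hu _ (by simp)), not_isSquare hb (hu _ (by simp)),
    not_isSquare hc (hu _ (by simp))⟩

end QuadraticallyLocal

/-! ### Classification of quadratic forms -/

section Forms

variable {F : Type*} [Field F] {l m n : Type*} [Fintype l] [Fintype m] [Fintype n]

/-- The symmetric bilinear form with Gram matrix `A` takes the value `e` on the diagonal. -/
def Represents (A : Matrix m m F) (e : F) : Prop :=
  ∃ v, v ⬝ᵥ A *ᵥ v = e

/-- The Gram matrix of the orthogonal sum of the unary form `⟨a⟩` and the form of `B`. -/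
def orthSum (a : F) (B : Matrix n n F) : Matrix (Unit ⊕ n) (Unit ⊕ n) F :=
  fromBlocks (diagonal fun _ => a) 0 0 B

theorem represents_orthSum {B : Matrix n n F} {f : F} (hf : Represents B f) (a x : F) :
    Represents (orthSum a B) (a * (x * x) + f) := by
  obtain ⟨v, rfl⟩ := hf
  refine ⟨Sum.elim (fun _ => x) v, ?_⟩
  rw [orthSum, fromBlocks_mulVec, Sum.elim_comp_inl, Sum.elim_comp_inr, zero_mulVec, zero_mulVec,
    add_zero, zero_add, sumElim_dotProduct_sumElim, diagonal_const_mulVec, dotProduct_smul]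
  simp only [dotProduct, Finset.univ_unique, Finset.sum_singleton, smul_eq_mul]

variable [DecidableEq l] [DecidableEq m] [DecidableEq n]

/-- The Gram matrix of a nondegenerate symmetric bilinear form. -/
structure IsRegularForm (A : Matrix m m F) : Prop where
  isSymm : A.IsSymm
  det_ne_zero : A.det ≠ 0

/-- Isometry of the bilinear forms with Gram matrices `A` and `B`. The index types may differ, so
the base change `P` is recorded together with its inverse `Q`. -/
def IsCongruent (A : Matrix m m F) (B : Matrix n n F) : Prop :=
  ∃ (P : Matrix m n F) (Q : Matrix n m F), P * Q = 1 ∧ Q * P = 1 ∧ Pᵀ * A * P = B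

theorem IsCongruent.symm {A : Matrix m m F} {B : Matrix n n F} (h : IsCongruent A B) :
    IsCongruent B A := by
  obtain ⟨P, Q, hPQ, hQP, rfl⟩ := h
  have transpose_mul_transpose : Qᵀ * Pᵀ = 1 := by rw [← transpose_mul, hPQ, transpose_one]
  refine ⟨Q, P, hQP, hPQ, ?_⟩
  calc Qᵀ * (Pᵀ * A * P) * Q = (Qᵀ * Pᵀ) * A * (P * Q) := by simp only [Matrix.mul_assoc]
    _ = A := by rw [transpose_mul_transpose, hPQ, Matrix.one_mul, Matrix.mul_one]

theorem IsCongruent.trans {A : Matrix l l F} {B : Matrix m m F} {C : Matrix n n F}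
    (h : IsCongruent A B) (h' : IsCongruent B C) : IsCongruent A C := by
  obtain ⟨P, Q, hPQ, hQP, rfl⟩ := h
  obtain ⟨R, S, hRS, hSR, rfl⟩ := h'
  refine ⟨P * R, S * Q, ?_, ?_, ?_⟩
  · rw [Matrix.mul_assoc, ← Matrix.mul_assoc R, hRS, Matrix.one_mul, hPQ]
  · rw [Matrix.mul_assoc, ← Matrix.mul_assoc Q, hQP, Matrix.one_mul, hSR]
  · simp only [Matrix.mul_assoc, transpose_mul]

theorem isCongruent_of_det_ne_zero (A : Matrix m m F) {P : Matrix m m F} (hP : P.det ≠ 0) :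
    IsCongruent A (Pᵀ * A * P) :=
  ⟨P, P⁻¹, mul_nonsing_inv _ hP.isUnit, nonsing_inv_mul _ hP.isUnit, rfl⟩

theorem isCongruent_submatrix (A : Matrix m m F) (f : n ≃ m) :
    IsCongruent A (A.submatrix f f) := by
  refine ⟨(1 : Matrix m m F).submatrix id f, (1 : Matrix m m F).submatrix f id, ?_, ?_, ?_⟩
  · rw [submatrix_mul_equiv, Matrix.mul_one, submatrix_id_id]
  · rw [← submatrix_mul _ _ _ _ _ Function.bijective_id, Matrix.mul_one, submatrix_one_equiv]
  · ext i j
    simp [Matrix.mul_apply, Matrix.one_apply]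

theorem IsCongruent.orthSum {A : Matrix m m F} {B : Matrix n n F} (h : IsCongruent A B) (a : F) :
    IsCongruent (orthSum a A) (orthSum a B) := by
  obtain ⟨P, Q, hPQ, hQP, rfl⟩ := h
  refine ⟨fromBlocks 1 0 0 P, fromBlocks 1 0 0 Q, ?_, ?_, ?_⟩
  · simp [fromBlocks_multiply, hPQ]
  · simp [fromBlocks_multiply, hQP]
  · simp [OrthPair.orthSum, fromBlocks_multiply, fromBlocks_transpose]

theorem IsCongruent.isSymm {A : Matrix m m F} {B : Matrix n n F} (h : IsCongruent A B)
    (hA : A.IsSymm) : B.IsSymm := by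
  obtain ⟨P, Q, -, -, rfl⟩ := h
  simp [Matrix.IsSymm, transpose_mul, hA.eq, Matrix.mul_assoc]

theorem IsCongruent.exists_det_eq {A : Matrix m m F} {B : Matrix n n F} (h : IsCongruent A B) :
    ∃ s ≠ 0, B.det = s * s * A.det := by
  obtain ⟨P, Q, hPQ, hQP, rfl⟩ := h
  let f : m ≃ n := indexEquivOfInv hPQ hQP
  refine ⟨(P.submatrix id f).det, fun h => ?_, ?_⟩
  · have : P.submatrix id f * Q.submatrix f id = 1 := by
      rw [submatrix_mul_equiv, hPQ, submatrix_id_id]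
    have := congrArg det this
    rw [det_mul, h, zero_mul, det_one] at this
    exact zero_ne_one this
  · have : (Pᵀ * A * P).submatrix f f = (P.submatrix id f)ᵀ * A * P.submatrix id f := by
      ext i j
      simp [Matrix.mul_apply]
    rw [← det_submatrix_equiv_self f, this, det_mul, det_mul, det_transpose]
    ring

theorem IsCongruent.isRegularForm {A : Matrix m m F} {B : Matrix n n F} (h : IsCongruent A B)
    (hA : IsRegularForm A) : IsRegularForm B where
  isSymm := h.isSymm hA.isSymm
  det_ne_zero := by
    obtain ⟨s, hs, hdet⟩ := h.exists_det_eq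
    exact hdet ▸ mul_ne_zero (mul_ne_zero hs hs) hA.det_ne_zero

theorem IsCongruent.isSquare_det_div {A : Matrix m m F} {B : Matrix n n F} (h : IsCongruent A B)
    (hA : A.det ≠ 0) : IsSquare (B.det / A.det) := by
  obtain ⟨s, -, hdet⟩ := h.exists_det_eq
  exact ⟨s, by rw [hdet, mul_div_cancel_right₀ _ hA]⟩

theorem Represents.congr {A : Matrix m m F} {B : Matrix n n F} {e : F} (hB : Represents B e)
    (h : IsCongruent A B) : Represents A e := by
  obtain ⟨P, Q, -, -, rfl⟩ := h
  obtain ⟨v, rfl⟩ := hB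
  refine ⟨P *ᵥ v, ?_⟩
  rw [← mulVec_mulVec, ← mulVec_mulVec, dotProduct_mulVec v, vecMul_transpose]

theorem det_orthSum (a : F) (B : Matrix n n F) : (orthSum a B).det = a * B.det := by
  rw [orthSum, det_fromBlocks_zero₂₁, det_diagonal, Finset.prod_const, Finset.card_univ,
    Fintype.card_unit, pow_one]

theorem IsRegularForm.of_orthSum {a : F} {B : Matrix n n F} (h : IsRegularForm (orthSum a B)) :
    IsRegularForm B where
  isSymm := (isSymm_fromBlocks_iff.1 h.isSymm).2.2.2
  det_ne_zero := right_ne_zero_of_mul (det_orthSum a B ▸ h.det_ne_zero)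

theorem exists_represents [Nonempty n] (h2 : (2 : F) ≠ 0) {A : Matrix n n F}
    (hA : IsRegularForm A) :
    ∃ e ≠ 0, Represents A e := by
  by_contra! h
  have self_eq_zero (v : n → F) : v ⬝ᵥ A *ᵥ v = 0 := by
    by_contra hv
    exact h _ hv ⟨v, rfl⟩
  have diag_eq_zero (i : n) : A i i = 0 := by simpa using self_eq_zero (Pi.single i 1)
  have A_eq_zero : A = 0 := by
    ext i k
    have hik := self_eq_zero (Pi.single i 1 + Pi.single k 1)
    simp only [mulVec_add, mulVec_single_one, add_dotProduct, dotProduct_add,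
      single_one_dotProduct, col_apply, diag_eq_zero, hA.isSymm.apply i k] at hik
    have : 2 * A i k = 0 := by linear_combination hik
    exact (mul_eq_zero.1 this).resolve_left h2
  exact hA.det_ne_zero (A_eq_zero ▸ det_zero)

theorem isCongruent_orthSum_schur {e : F} (he : e ≠ 0) (c : Matrix Unit n F) (D : Matrix n n F) :
    IsCongruent (fromBlocks (diagonal fun _ => e) c cᵀ D) (orthSum e (D - e⁻¹ • (cᵀ * c))) := by
  refine ⟨fromBlocks 1 (-(e⁻¹ • c)) 0 1, fromBlocks 1 (e⁻¹ • c) 0 1, ?_, ?_, ?_⟩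
  · simp [fromBlocks_multiply]
  · simp [fromBlocks_multiply]
  · have : (diagonal fun _ : Unit => e) = e • 1 := (smul_one_eq_diagonal e).symm
    simp [orthSum, this, fromBlocks_multiply, fromBlocks_transpose, he, sub_eq_neg_add]

theorem exists_isCongruent_orthSum_of_apply_self {k : ℕ} {A : Matrix (Fin (k + 1)) (Fin (k + 1)) F}
    (hA : A.IsSymm) {i : Fin (k + 1)} (hi : A i i ≠ 0) :
    ∃ B : Matrix (Fin k) (Fin k) F, IsCongruent A (orthSum (A i i) B) := by
  let f : Unit ⊕ Fin k ≃ Fin (k + 1) :=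
    ((Equiv.sumComm _ _).trans (Equiv.optionEquivSumPUnit _).symm).trans (finSuccEquiv' i).symm
  have f_inl : f (.inl ()) = i := by simp [f]
  set M := A.submatrix f f
  have M_symm : M.IsSymm := hA.submatrix f
  have M_eq : M = fromBlocks (diagonal fun _ => A i i) M.toBlocks₁₂ M.toBlocks₁₂ᵀ M.toBlocks₂₂ := by
    conv_lhs => rw [← fromBlocks_toBlocks M]
    rw [fromBlocks_inj]
    refine ⟨?_, rfl, ?_, rfl⟩
    · ext
      simp [M, toBlocks₁₁, f_inl]
    · ext a b
      exact M_symm.apply _ _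
  exact ⟨_, (isCongruent_submatrix A f).trans (M_eq ▸ isCongruent_orthSum_schur hi _ _)⟩

theorem exists_isCongruent_apply_self_eq {A : Matrix n n F} {e : F} (he : e ≠ 0)
    (hr : Represents A e) : ∃ B : Matrix n n F, IsCongruent A B ∧ ∃ i, B i i = e := by
  obtain ⟨v, hv⟩ := hr
  obtain ⟨i, hi⟩ : ∃ i, v i ≠ 0 := by
    by_contra! h
    obtain rfl : v = 0 := funext h
    exact he (by rw [← hv, zero_dotProduct])
  let P := (1 : Matrix n n F).updateCol i v
  have det_P : P.det = v i := by rw [← cramer_apply, cramer_one]; rfl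
  have P_single : P *ᵥ Pi.single i 1 = v := by ext k; simp [P]
  refine ⟨Pᵀ * A * P, isCongruent_of_det_ne_zero A (det_P ▸ hi), i, ?_⟩
  calc (Pᵀ * A * P) i i = Pi.single i 1 ⬝ᵥ (Pᵀ * A * P) *ᵥ Pi.single i 1 := by simp
    _ = (P *ᵥ Pi.single i 1) ⬝ᵥ A *ᵥ P *ᵥ Pi.single i 1 := by
      rw [← mulVec_mulVec, ← mulVec_mulVec, dotProduct_mulVec _ Pᵀ, vecMul_transpose]
    _ = e := by rw [P_single, hv]

theorem exists_isCongruent_orthSum {k : ℕ} {A : Matrix (Fin (k + 1)) (Fin (k + 1)) F}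
    (hA : IsRegularForm A) {e : F} (he : e ≠ 0) (hr : Represents A e) :
    ∃ B : Matrix (Fin k) (Fin k) F, IsRegularForm B ∧ IsCongruent A (orthSum e B) := by
  obtain ⟨A', hA', i, rfl⟩ := exists_isCongruent_apply_self_eq he hr
  obtain ⟨B, hB⟩ := exists_isCongruent_orthSum_of_apply_self (hA'.isSymm hA.isSymm) he
  have hAB := hA'.trans hB
  exact ⟨B, (hAB.isRegularForm hA).of_orthSum, hAB⟩

end Forms

section Classification

variable {F : Type*} [Field F]

theorem isCongruent_of_subsingleton {n : Type*} [Fintype n] [DecidableEq n] [Subsingleton n]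
    {A B : Matrix n n F} (hA : A.det ≠ 0) (hB : B.det ≠ 0) (h : IsSquare (B.det / A.det)) :
    IsCongruent A B := by
  obtain ⟨s, hs⟩ := h
  have hs0 : s ≠ 0 := by
    rintro rfl
    exact div_ne_zero hB hA (by rw [hs, zero_mul])
  rw [div_eq_iff hA] at hs
  convert isCongruent_of_det_ne_zero A (P := s • 1) (by simp [hs0])
  ext i k
  obtain rfl := Subsingleton.elim i k
  rw [det_eq_elem_of_subsingleton A i, det_eq_elem_of_subsingleton B i] at hs
  simp [hs, mul_assoc]

theorem isSquare_det_div_of_isCongruent_orthSum {k : ℕ}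
    {A A' : Matrix (Fin (k + 1)) (Fin (k + 1)) F} {B B' : Matrix (Fin k) (Fin k) F} {e : F}
    (hA : A.det ≠ 0) (hA' : A'.det ≠ 0) (he : e ≠ 0) (h : IsCongruent A (orthSum e B))
    (h' : IsCongruent A' (orthSum e B')) (hdet : IsSquare (A'.det / A.det)) :
    IsSquare (B'.det / B.det) := by
  have hB := det_orthSum e B ▸ h.isSquare_det_div hA
  have hB' := det_orthSum e B' ▸ h'.isSquare_det_div hA'
  have hBB' : B'.det / B.det =
      e * B'.det / A'.det * (A'.det / A.det) / (e * B.det / A.det) := by field_simp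
  rw [hBB']
  exact (hB'.mul hdet).div hB

theorem Represents.of_div_mem_normGroup {A : Matrix (Fin 2) (Fin 2) F} (hA : IsRegularForm A)
    {δ : F} (hδ : δ ≠ 0) (hAδ : IsSquare (A.det / δ)) {a f : Fˣ} (ha : Represents A a)
    (hf : f / a ∈ normGroup (-δ)) : Represents A f := by
  obtain ⟨B, -, hAB⟩ := exists_isCongruent_orthSum hA a.ne_zero ha
  obtain ⟨s, hs, hdet⟩ := hAB.exists_det_eq
  obtain ⟨r, hr⟩ := hAδ
  rw [div_eq_iff hδ] at hr
  have hr0 : r ≠ 0 := by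
    rintro rfl
    exact hA.det_ne_zero (by rw [hr]; ring)
  rw [det_orthSum, det_fin_one, hr] at hdet
  obtain ⟨x, y, hxy⟩ := hf
  rw [Units.val_div_eq_div_val, div_eq_iff a.ne_zero] at hxy
  let z := a * y / (r * s)
  have hB : Represents B (B 0 0 * (z * z)) := ⟨fun _ => z, by
    simp only [dotProduct, mulVec, Finset.univ_unique, Finset.sum_singleton, Fin.default_eq_zero]
    ring⟩
  convert (represents_orthSum hB (a : F) x).congr hAB
  rw [hxy]
  simp only [z]
  field_simp
  linear_combination -y ^ 2 * hdet

theorem isCongruent_of_represents {A B : Matrix (Fin 2) (Fin 2) F} (hA : IsRegularForm A)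
    (hB : IsRegularForm B) (hdet : IsSquare (B.det / A.det)) {e : F} (he : e ≠ 0)
    (hAe : Represents A e) (hBe : Represents B e) : IsCongruent A B := by
  obtain ⟨A', hA', hAA'⟩ := exists_isCongruent_orthSum hA he hAe
  obtain ⟨B', hB', hBB'⟩ := exists_isCongruent_orthSum hB he hBe
  have hdet' := isSquare_det_div_of_isCongruent_orthSum hA.det_ne_zero hB.det_ne_zero he
    hAA' hBB' hdet
  exact (hAA'.trans ((isCongruent_of_subsingleton hA'.det_ne_zero hB'.det_ne_zero hdet').orthSum
    e)).trans hBB'.symm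

theorem isCongruent_of_isSquare_neg_det (h2 : (2 : F) ≠ 0) {A B : Matrix (Fin 2) (Fin 2) F}
    (hA : IsRegularForm A) (hB : IsRegularForm B) (hdet : IsSquare (B.det / A.det))
    (hsq : IsSquare (-A.det)) : IsCongruent A B := by
  obtain ⟨a, ha, hAa⟩ := exists_represents h2 hA
  obtain ⟨b, hb, hBb⟩ := exists_represents h2 hB
  refine isCongruent_of_represents hA hB hdet hb ?_ hBb
  refine Represents.of_div_mem_normGroup (a := .mk0 a ha) (f := .mk0 b hb) hA hA.det_ne_zero
    (by simp [hA.det_ne_zero]) hAa ?_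
  rw [normGroup_eq_top h2 (neg_ne_zero.2 hA.det_ne_zero) hsq]
  trivial

variable (hF : IsQuadraticallyLocal F)
include hF

theorem exists_div_mem_normGroup {α : F} (hα : α ≠ 0) (a : Fin 3 → Fˣ) :
    ∃ i k, i ≠ k ∧ a k / a i ∈ normGroup α := by
  by_contra! h
  refine h 2 1 (by decide) ?_
  have := mul_mem_normGroup_of_notMem hF hα (h 0 1 (by decide)) (h 2 0 (by decide))
  rwa [div_mul_div_cancel] at this

theorem exists_isCongruent_of_binary {A : Fin 3 → Matrix (Fin 2) (Fin 2) F}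
    (hA : ∀ i, IsRegularForm (A i)) (hdet : ∀ i k, IsSquare ((A k).det / (A i).det)) :
    ∃ i k, i ≠ k ∧ IsCongruent (A i) (A k) := by
  choose a ha hAa using fun i => exists_represents hF.two_ne_zero (hA i)
  obtain ⟨i, k, hik, hmem⟩ := exists_div_mem_normGroup hF (neg_ne_zero.2 (hA 0).det_ne_zero)
    fun i => Units.mk0 (a i) (ha i)
  refine ⟨i, k, hik, isCongruent_of_represents (hA i) (hA k) (hdet i k) (ha k) ?_ (hAa k)⟩
  exact .of_div_mem_normGroup (hA i) (hA 0).det_ne_zero (hdet 0 i) (hAa i) hmem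

theorem IsRegularForm.represents_of_not_isSquare_mul {k : ℕ}
    {A : Matrix (Fin (k + 3)) (Fin (k + 3)) F} (hA : IsRegularForm A) :
    ∃ δ ≠ 0, ∀ e ≠ 0, ¬IsSquare (δ * e) → Represents A e := by
  obtain ⟨a, ha, hAa⟩ := exists_represents hF.two_ne_zero hA
  obtain ⟨B, hB, hAB⟩ := exists_isCongruent_orthSum hA ha hAa
  obtain ⟨b, hb, hBb⟩ := exists_represents hF.two_ne_zero hB
  obtain ⟨C, hC, hBC⟩ := exists_isCongruent_orthSum hB hb hBb
  obtain ⟨c, hc, v, hv⟩ := exists_represents hF.two_ne_zero hC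
  refine ⟨-(a * b * c), neg_ne_zero.2 (mul_ne_zero (mul_ne_zero ha hb) hc), fun e he hsq => ?_⟩
  obtain ⟨x, y, z, rfl⟩ := exists_ternary_eq hF ha hb hc he hsq
  have hCz : Represents C (c * (z * z)) :=
    ⟨z • v, by
      simp only [mulVec_smul, dotProduct_smul, smul_dotProduct, hv, smul_eq_mul]
      ring⟩
  exact (represents_orthSum ((represents_orthSum hCz b y).congr hBC) a x).congr hAB

theorem exists_common_represents {k : ℕ} {A : Fin 3 → Matrix (Fin (k + 3)) (Fin (k + 3)) F}
    (hA : ∀ i, IsRegularForm (A i)) : ∃ e ≠ 0, ∀ i, Represents (A i) e := by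
  choose δ hδ hrep using fun i => (hA i).represents_of_not_isSquare_mul hF
  obtain ⟨e, he, h0, h1, h2⟩ := exists_forall_not_isSquare_mul hF (hδ 0) (hδ 1) (hδ 2)
  refine ⟨e, he, fun i => hrep i e he ?_⟩
  fin_cases i
  exacts [h0, h1, h2]

theorem exists_isCongruent : ∀ {n : ℕ} {A : Fin 3 → Matrix (Fin n) (Fin n) F},
    (∀ i, IsRegularForm (A i)) → (∀ i k, IsSquare ((A k).det / (A i).det)) →
    ∃ i k, i ≠ k ∧ IsCongruent (A i) (A k)
  | 0, _, hA, hdet | 1, _, hA, hdet =>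
    ⟨0, 1, by decide,
      isCongruent_of_subsingleton (hA 0).det_ne_zero (hA 1).det_ne_zero (hdet 0 1)⟩
  | 2, _, hA, hdet => exists_isCongruent_of_binary hF hA hdet
  | k + 3, A, hA, hdet => by
    obtain ⟨e, he, hrep⟩ := exists_common_represents hF hA
    choose B hB hAB using fun i => exists_isCongruent_orthSum (hA i) he (hrep i)
    have hdetB (i k) : IsSquare ((B k).det / (B i).det) :=
      isSquare_det_div_of_isCongruent_orthSum (hA i).det_ne_zero (hA k).det_ne_zero he
        (hAB i) (hAB k) (hdet i k)
    obtain ⟨i, k, hik, hBik⟩ := exists_isCongruent hB hdetB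
    exact ⟨i, k, hik, ((hAB i).trans (hBik.orthSum e)).trans (hAB k).symm⟩

end Classification

/-! ### Descent of cocycles to forms -/

section Reflection

variable {F n : Type*} [Field F] [Fintype n] [DecidableEq n] [Nonempty n]

theorem exists_reflection (h2 : (2 : F) ≠ 0) {A : Matrix n n F} (hA : IsRegularForm A) :
    ∃ r : Matrix n n F, r * r = 1 ∧ rᵀ * A * r = A ∧ r.det = -1 := by
  obtain ⟨e, he, v, hv⟩ := exists_represents h2 hA
  obtain ⟨c, hc⟩ : ∃ c, c * e = 2 := ⟨2 / e, div_mul_cancel₀ _ he⟩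
  let w := A *ᵥ v
  let R := vecMulVec v w
  have w_dotProduct : w ⬝ᵥ v = e := by rw [dotProduct_comm, hv]
  have R_mul_R : R * R = e • R := by
    rw [vecMulVec_mul_vecMulVec, w_dotProduct, vecMulVec_smul]
  have A_mul_R : A * R = vecMulVec w w := mul_vecMulVec _ _ _
  have transpose_R_mul : Rᵀ * A = A * R := by
    rw [A_mul_R, transpose_vecMulVec, vecMulVec_mul, ← mulVec_transpose, hA.isSymm.eq]
  have coeff_eq_zero : 2 * c - c * (c * e) = 0 := by linear_combination -c * hc
  refine ⟨1 - c • R, ?_, ?_, ?_⟩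
  · calc (1 - c • R) * (1 - c • R) = 1 - (2 * c - c * (c * e)) • R := by
          simp only [sub_mul, mul_sub, smul_mul_smul_comm, R_mul_R, Matrix.one_mul, Matrix.mul_one]
          module
      _ = 1 := by rw [coeff_eq_zero, zero_smul, sub_zero]
  · calc (1 - c • R)ᵀ * A * (1 - c • R) = A - (2 * c - c * (c * e)) • (A * R) := by
          simp only [transpose_sub, transpose_one, transpose_smul, sub_mul, mul_sub,
            smul_mul_assoc, mul_smul_comm, transpose_R_mul, Matrix.mul_assoc, R_mul_R,
            Matrix.one_mul, Matrix.mul_one]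
          module
      _ = A := by rw [coeff_eq_zero, zero_smul, sub_zero]
  · rw [sub_eq_add_neg, ← neg_smul, ← smul_vecMulVec, vecMulVec_eq Unit,
      det_one_add_replicateCol_mul_replicateRow, dotProduct_smul, w_dotProduct, smul_eq_mul]
    linear_combination -hc

end Reflection

section BaseChange

variable {E n : Type*} [Field E]

/-- The subfield `F` of `E` fixed by `σ`. -/
abbrev fixedSubfield (σ : E →+* E) : Subfield E :=
  σ.eqLocusField (RingHom.id E)

/-- Extension of scalars of matrices from the fixed field of `σ` to `E`. -/
abbrev baseChange (σ : E →+* E) (A : Matrix n n (fixedSubfield σ)) :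
    Matrix n n E :=
  A.map (algebraMap (fixedSubfield σ) E)

variable {σ : E →+* E}

theorem baseChange_transpose (A : Matrix n n (fixedSubfield σ)) :
    baseChange σ Aᵀ = (baseChange σ A)ᵀ :=
  rfl

theorem map_baseChange (A : Matrix n n (fixedSubfield σ)) :
    (baseChange σ A).map σ = baseChange σ A := by
  ext i k
  exact (A i k).2

theorem exists_baseChange_eq {A : Matrix n n E} (hA : A.map σ = A) :
    ∃ B, baseChange σ B = A :=
  ⟨.of fun i k => ⟨A i k, congrFun₂ hA i k⟩, rfl⟩

variable [Fintype n]

theorem det_map_ringHom [DecidableEq n] {K L : Type*} [CommRing K] [CommRing L] (f : K →+* L)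
    (A : Matrix n n K) : (A.map f).det = f A.det :=
  (f.map_det A).symm

theorem baseChange_mul (A B : Matrix n n (fixedSubfield σ)) :
    baseChange σ (A * B) = baseChange σ A * baseChange σ B :=
  Matrix.map_mul

/- With `h = (ι + t) + (t - ι) x` for `t` fixed by `σ`, the equation `x σ(h) = h` follows from
`x σ(x) = 1`, and `det h` is a polynomial in `t` that does not vanish at `t = ι`. -/
theorem exists_mul_map_eq [DecidableEq n] [Infinite (fixedSubfield σ)] (h2 : (2 : E) ≠ 0) {ι : E}
    (hι0 : ι ≠ 0) (hι : σ ι = -ι) {x : Matrix n n E} (hx : x * x.map σ = 1) :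
    ∃ h : Matrix n n E, h.det ≠ 0 ∧ x * h.map σ = h := by
  let h (t : E) := (ι + t) • (1 : Matrix n n E) + (t - ι) • x
  obtain ⟨P, hP⟩ : ∃ P : Polynomial E, ∀ t, P.eval t = (h t).det := by
    open Polynomial in
    refine ⟨((C ι + X) • (1 : Matrix n n E[X]) + (X - C ι) • x.map C).det, fun t => ?_⟩
    rw [← coe_evalRingHom, ← det_map_ringHom]
    congr 1
    ext i k
    simp [h, Matrix.one_apply, apply_ite (Polynomial.eval t)]
  obtain ⟨t, ht⟩ : ∃ t : fixedSubfield σ, P.eval (t : E) ≠ 0 := by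
    by_contra! hroot
    have P_eq_zero : P = 0 := P.eq_zero_of_infinite_isRoot
      ((Set.infinite_range_of_injective Subtype.val_injective).mono (Set.range_subset_iff.2 hroot))
    have det_h_ι := hP ι
    simp only [P_eq_zero, Polynomial.eval_zero, h, sub_self, zero_smul, add_zero, det_smul,
      det_one, mul_one, ← two_mul] at det_h_ι
    exact pow_ne_zero _ (mul_ne_zero h2 hι0) det_h_ι.symm
  refine ⟨h t, hP t ▸ ht, ?_⟩
  have map_h : (h t).map σ = (t - ι) • (1 : Matrix n n E) + (t + ι) • x.map σ := by
    ext i k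
    have ht : σ t = t := t.2
    simp only [h, map_apply, Matrix.add_apply, Matrix.smul_apply, Matrix.one_apply, smul_eq_mul,
      map_add, map_mul, map_sub, apply_ite σ, map_zero, map_one, hι, ht]
    ring
  simp only [map_h, mul_add, mul_smul_comm, hx, Matrix.mul_one, h]
  rw [add_comm, add_comm (t : E)]

end BaseChange

section Descent

variable {E : Type} [Field E] {n : ℕ}

/-- A trivialization `x = h σ(h)⁻¹` of the cocycle `x ∈ X^j`, together with the form `Y` over the
fixed field of `σ` to which it transports `j`. The congruence class of `Y` determines the
`G^j(E)`-orbit of `x`. -/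
structure IsDescent (σ : E →+* E) (j x h : Matrix (Fin n) (Fin n) E)
    (Y : Matrix (Fin n) (Fin n) (fixedSubfield σ)) : Prop where
  det_ne_zero : h.det ≠ 0
  mul_map_eq : x * h.map σ = h
  gram_eq : hᵀ * j * h = baseChange σ Y

variable {σ : E →+* E}

theorem exists_isDescent [Infinite (fixedSubfield σ)] (h2 : (2 : E) ≠ 0) {ι : E} (hι0 : ι ≠ 0)
    (hι : σ ι = -ι) {j x : Matrix (Fin n) (Fin n) E} (hj : j.map σ = j) (hx : Xj σ j x) :
    ∃ h Y, IsDescent σ j x h Y := by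
  obtain ⟨⟨-, hxj⟩, hxx⟩ := hx
  obtain ⟨h, hdet, hh⟩ := exists_mul_map_eq h2 hι0 hι hxx
  have transport : (h.map σ)ᵀ * j * h.map σ = hᵀ * j * h := by
    calc (h.map σ)ᵀ * j * h.map σ = (x * h.map σ)ᵀ * j * (x * h.map σ) := by
          conv_lhs => rw [← hxj]
          simp only [transpose_mul, Matrix.mul_assoc]
      _ = hᵀ * j * h := by rw [hh]
  obtain ⟨Y, hY⟩ := exists_baseChange_eq (σ := σ) (A := hᵀ * j * h) (by
    rw [Matrix.map_mul, Matrix.map_mul, hj, transpose_map, transport])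
  exact ⟨h, Y, hdet, hh, hY.symm⟩

namespace IsDescent

variable {j x x₁ x₂ h h₁ h₂ : Matrix (Fin n) (Fin n) E}
  {Y Y₁ Y₂ : Matrix (Fin n) (Fin n) (fixedSubfield σ)}

theorem coe_det (H : IsDescent σ j x h Y) : (Y.det : E) = h.det * h.det * j.det := by
  have := congrArg det H.gram_eq
  rw [det_map_ringHom, det_mul, det_mul, det_transpose] at this
  exact this.symm.trans (by ring)

theorem det_mul_map_det (H : IsDescent σ j x h Y) : x.det * σ h.det = h.det := by
  rw [← det_map_ringHom, ← det_mul, H.mul_map_eq]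

theorem isRegularForm (H : IsDescent σ j x h Y) (hj : j.det ≠ 0) (hjs : jᵀ = j) :
    IsRegularForm Y where
  isSymm := by
    apply Matrix.map_injective (algebraMap (fixedSubfield σ) E).injective
    change baseChange σ Yᵀ = baseChange σ Y
    rw [baseChange_transpose, ← H.gram_eq]
    simp only [transpose_mul, transpose_transpose, hjs, Matrix.mul_assoc]
  det_ne_zero hY := by
    have := H.coe_det
    rw [hY] at this
    exact mul_ne_zero (mul_ne_zero H.det_ne_zero H.det_ne_zero) hj this.symm

theorem div_mem_fixedSubfield (H : IsDescent σ j x h Y) {θ : E} (hθ : θ ≠ 0)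
    (hxθ : x.det * σ θ = θ) : h.det / θ ∈ fixedSubfield σ := by
  have hx0 : x.det ≠ 0 := left_ne_zero_of_mul (hxθ ▸ hθ)
  change σ (h.det / θ) = h.det / θ
  rw [map_div₀, ← mul_div_mul_left _ _ hx0, H.det_mul_map_det, hxθ]

theorem isSquare_det_div (H₁ : IsDescent σ j x₁ h₁ Y₁) (H₂ : IsDescent σ j x₂ h₂ Y₂)
    (hj : j.det ≠ 0) (hdet : x₁.det = x₂.det) : IsSquare (Y₂.det / Y₁.det) := by
  refine ⟨⟨_, H₂.div_mem_fixedSubfield H₁.det_ne_zero (hdet ▸ H₁.det_mul_map_det)⟩, ?_⟩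
  apply Subtype.ext
  have := H₁.det_ne_zero
  push_cast
  rw [H₁.coe_det, H₂.coe_det]
  field_simp

theorem isSquare_neg_det (H : IsDescent σ j x h Y) {θ c : E} (hθ : θ ≠ 0)
    (hxθ : x.det * σ θ = θ) (hc : σ c = c) (hjc : θ * θ * j.det = -(c * c)) :
    IsSquare (-Y.det) := by
  refine ⟨⟨_, mul_mem (H.div_mem_fixedSubfield hθ hxθ) hc⟩, ?_⟩
  apply Subtype.ext
  push_cast
  rw [H.coe_det]
  field_simp
  linear_combination -h.det ^ 2 * hjc

theorem mul_baseChange (H : IsDescent σ j x h Y) {Q : Matrix (Fin n) (Fin n) (fixedSubfield σ)}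
    (hQ : Q.det ≠ 0) : IsDescent σ j x (h * baseChange σ Q) (Qᵀ * Y * Q) where
  det_ne_zero := by
    rw [det_mul, det_map_ringHom]
    exact mul_ne_zero H.det_ne_zero (by simpa using hQ)
  mul_map_eq := by rw [Matrix.map_mul, map_baseChange, ← Matrix.mul_assoc, H.mul_map_eq]
  gram_eq := by
    rw [baseChange_mul, baseChange_mul, ← H.gram_eq, baseChange_transpose]
    simp only [transpose_mul, Matrix.mul_assoc]

theorem det_eq_or_eq_neg (H₁ : IsDescent σ j x₁ h₁ Y) (H₂ : IsDescent σ j x₂ h₂ Y)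
    (hj : j.det ≠ 0) : h₁.det = h₂.det ∨ h₁.det = -h₂.det :=
  mul_self_eq_mul_self_iff.1 (mul_right_cancel₀ hj (H₁.coe_det.symm.trans H₂.coe_det))

theorem orbSG_of_det_eq (H₁ : IsDescent σ j x₁ h₁ Y) (H₂ : IsDescent σ j x₂ h₂ Y)
    (hdet : h₁.det = h₂.det) : orbSG σ j x₁ x₂ := by
  have inv_mul : h₁⁻¹ * h₁ = 1 := nonsing_inv_mul _ H₁.det_ne_zero.isUnit
  have mul_inv : h₁ * h₁⁻¹ = 1 := mul_nonsing_inv _ H₁.det_ne_zero.isUnit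
  let g := h₂ * h₁⁻¹
  have det_g : g.det = 1 := by
    rw [det_mul, ← hdet, ← det_mul, mul_inv, det_one]
  have g_mul : g * h₁ = h₂ := by rw [Matrix.mul_assoc, inv_mul, Matrix.mul_one]
  refine ⟨g, ⟨(isUnit_iff_isUnit_det g).2 (det_g ▸ isUnit_one), ?_⟩, det_g, ?_⟩
  · calc gᵀ * j * g = (h₁⁻¹)ᵀ * (h₂ᵀ * j * h₂) * h₁⁻¹ := by
          simp only [g, transpose_mul, Matrix.mul_assoc]
      _ = (h₁ * h₁⁻¹)ᵀ * j * (h₁ * h₁⁻¹) := by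
          rw [H₂.gram_eq, ← H₁.gram_eq]
          simp only [transpose_mul, Matrix.mul_assoc]
      _ = j := by rw [mul_inv, transpose_one, Matrix.one_mul, Matrix.mul_one]
  · have map_h₁ : h₁.map σ * (h₁.map σ)⁻¹ = 1 := by
      refine mul_nonsing_inv _ (IsUnit.mk0 _ ?_)
      simpa [det_map_ringHom] using H₁.det_ne_zero
    have isUnit_det_map_g : IsUnit (g.map σ).det := by simp [det_map_ringHom, det_g]
    have : x₂ * g.map σ = g * x₁ := by
      calc x₂ * g.map σ = x₂ * (g.map σ * h₁.map σ) * (h₁.map σ)⁻¹ := by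
            rw [Matrix.mul_assoc, Matrix.mul_assoc, map_h₁, Matrix.mul_one]
        _ = g * (x₁ * h₁.map σ) * (h₁.map σ)⁻¹ := by
            rw [← Matrix.map_mul, g_mul, H₂.mul_map_eq, H₁.mul_map_eq, g_mul]
        _ = g * x₁ := by rw [Matrix.mul_assoc g, Matrix.mul_assoc x₁, map_h₁, Matrix.mul_one]
    rw [← this, mul_nonsing_inv_cancel_right _ _ isUnit_det_map_g]

theorem orbSG_of_isCongruent (h2 : (2 : fixedSubfield σ) ≠ 0) (H₁ : IsDescent σ j x₁ h₁ Y₁)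
    (H₂ : IsDescent σ j x₂ h₂ Y₂) (hj : j.det ≠ 0) (hY : IsRegularForm Y₁)
    (hcongr : IsCongruent Y₁ Y₂) : orbSG σ j x₁ x₂ := by
  obtain ⟨Q, R, hQR, -, rfl⟩ := hcongr.symm
  have hQ : Q.det ≠ 0 := (isUnit_det_of_right_inverse hQR).ne_zero
  have H₂' := H₂.mul_baseChange hQ
  obtain hdet | hdet := H₁.det_eq_or_eq_neg H₂' hj
  · exact H₁.orbSG_of_det_eq H₂' hdet
  obtain _ | _ := isEmpty_or_nonempty (Fin n)
  · exact H₁.orbSG_of_det_eq H₂' (by rw [det_isEmpty, det_isEmpty])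
  obtain ⟨r, -, hr, det_r⟩ := exists_reflection h2 hY
  have H₂'' := H₂'.mul_baseChange (Q := r) (by simp [det_r])
  rw [hr] at H₂''
  refine H₁.orbSG_of_det_eq H₂'' ?_
  rw [det_mul, det_map_ringHom, det_r, hdet]
  simp

end IsDescent

end Descent

theorem isQuadraticallyLocal_of_finiteDimensional_padic (p : ℕ) [Fact p.Prime]
    (F : Type*) [Field F] [Algebra ℚ_[p] F] [FiniteDimensional ℚ_[p] F] :
    IsQuadraticallyLocal F where
  two_ne_zero := by
    have : CharZero F := charZero_of_injective_algebraMap (algebraMap ℚ_[p] F).injective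
    exact _root_.two_ne_zero
  index_normGroup := index_normGroup p
  four_le_index := by
    have := finite_padicInt_quotient_span p (_root_.two_ne_zero (α := ℤ_[p]))
    rw [index_range_sq p F]
    exact Nat.le_mul_of_pos_right _ (pow_pos Nat.card_pos _)

theorem IsQuadraticallyLocal.infinite {F : Type*} [Field F] (hF : IsQuadraticallyLocal F) :
    Infinite F := by
  by_contra hfin
  have : Finite F := not_infinite_iff_finite.1 hfin
  have four_le_index := hF.four_le_index
  rw [Subgroup.index_range, card_ker_powMonoidHom_two hF.two_ne_zero] at four_le_index
  omega

section Orbits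

variable {E : Type} [Field E] {σ : E →+* E} {n : ℕ}

theorem Gj.det_eq_one_or_neg_one {j g : Matrix (Fin n) (Fin n) E} (hg : Gj j g)
    (hj : j.det ≠ 0) : g.det = 1 ∨ g.det = -1 := by
  have hdet := congrArg det hg.2
  rw [det_mul, det_mul, det_transpose] at hdet
  exact mul_self_eq_one_iff.1 (mul_right_cancel₀ hj (by linear_combination hdet))

theorem sXj_one (σ : E →+* E) (j : Matrix (Fin n) (Fin n) E) : SXj σ j 1 := by
  refine ⟨⟨⟨isUnit_one, ?_⟩, ?_⟩, det_one⟩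
  · rw [transpose_one, Matrix.one_mul, Matrix.mul_one]
  · rw [Matrix.map_one _ (map_zero σ) (map_one σ), Matrix.one_mul]

theorem exists_xj_det_eq_neg_one [Nonempty (Fin n)] (h2 : (2 : fixedSubfield σ) ≠ 0)
    {j : Matrix (Fin n) (Fin n) E} (hj : j.map σ = j) (hjU : IsUnit j) (hjs : jᵀ = j) :
    ∃ x, Xj σ j x ∧ x.det = -1 := by
  obtain ⟨J, rfl⟩ := exists_baseChange_eq hj
  have hJ : IsRegularForm J := by
    refine ⟨Matrix.map_injective (algebraMap (fixedSubfield σ) E).injective hjs, fun hdet => ?_⟩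
    have := ((isUnit_iff_isUnit_det _).1 hjU).ne_zero
    rw [det_map_ringHom, hdet, map_zero] at this
    exact this rfl
  obtain ⟨r, hrr, hr, det_r⟩ := exists_reflection h2 hJ
  have mul_self : baseChange σ r * baseChange σ r = 1 := by
    rw [← baseChange_mul, hrr, baseChange, Matrix.map_one _ (map_zero _) (map_one _)]
  refine ⟨baseChange σ r, ⟨⟨IsUnit.of_mul_eq_one _ mul_self, ?_⟩, ?_⟩, ?_⟩
  · rw [← baseChange_transpose, ← baseChange_mul, ← baseChange_mul, hr]
  · rw [map_baseChange, mul_self]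
  · rw [det_map_ringHom, det_r, map_neg, map_one]

theorem exists_orbSG_of_det_eq (hF : IsQuadraticallyLocal (fixedSubfield σ)) {ι : E}
    (hι0 : ι ≠ 0) (hι : σ ι = -ι) {j : Matrix (Fin n) (Fin n) E} (hj : j.map σ = j)
    (hjU : j.det ≠ 0) (hjs : jᵀ = j)
    {x : Fin 3 → Matrix (Fin n) (Fin n) E} (hx : ∀ i, Xj σ j (x i))
    (hdet : ∀ i k, (x i).det = (x k).det) : ∃ i k, i < k ∧ orbSG σ j (x i) (x k) := by
  have := hF.infinite
  have h2 : (2 : E) ≠ 0 := fun h => hF.two_ne_zero (Subtype.ext h)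
  choose h Y H using fun i => exists_isDescent h2 hι0 hι hj (hx i)
  have hY (i) := (H i).isRegularForm hjU hjs
  obtain ⟨i, k, hik, hY_ik⟩ := exists_isCongruent hF hY
    fun i k => (H i).isSquare_det_div (H k) hjU (hdet i k)
  obtain hik | hik := hik.lt_or_gt
  · exact ⟨i, k, hik, (H i).orbSG_of_isCongruent hF.two_ne_zero (H k) hjU (hY i) hY_ik⟩
  · exact ⟨k, i, hik, (H k).orbSG_of_isCongruent hF.two_ne_zero (H i) hjU (hY k) hY_ik.symm⟩

theorem orbSG_of_mul_self_mul_det_eq [Infinite (fixedSubfield σ)]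
    (h2 : (2 : fixedSubfield σ) ≠ 0) {ι : E} (hι0 : ι ≠ 0) (hι : σ ι = -ι)
    {j : Matrix (Fin 2) (Fin 2) E} (hj : j.map σ = j) (hjU : j.det ≠ 0) (hjs : jᵀ = j)
    {θ c : E} (hθ : θ ≠ 0) (hc : σ c = c) (hjc : θ * θ * j.det = -(c * c))
    {x₁ x₂ : Matrix (Fin 2) (Fin 2) E} (hx₁ : Xj σ j x₁) (hx₂ : Xj σ j x₂)
    (hdet : x₁.det = x₂.det) (hxθ : x₁.det * σ θ = θ) : orbSG σ j x₁ x₂ := by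
  have h2' : (2 : E) ≠ 0 := fun h => h2 (Subtype.ext h)
  obtain ⟨h₁, Y₁, H₁⟩ := exists_isDescent h2' hι0 hι hj hx₁
  obtain ⟨h₂, Y₂, H₂⟩ := exists_isDescent h2' hι0 hι hj hx₂
  have hY₁ := H₁.isRegularForm hjU hjs
  have hY₂ := H₂.isRegularForm hjU hjs
  exact H₁.orbSG_of_isCongruent h2 H₂ hjU hY₁
    (isCongruent_of_isSquare_neg_det h2 hY₁ hY₂
      (H₁.isSquare_det_div H₂ hjU hdet) (H₁.isSquare_neg_det hθ hxθ hc hjc))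

end Orbits

theorem isQuadraticallyLocal_fixedSubfield (p : ℕ) [Fact p.Prime] {E : Type*} [Field E]
    [Algebra ℚ_[p] E] [FiniteDimensional ℚ_[p] E] (σ : E →ₐ[ℚ_[p]] E) :
    IsQuadraticallyLocal (fixedSubfield (σ : E →+* E)) :=
  let F : IntermediateField ℚ_[p] E :=
    (fixedSubfield (σ : E →+* E)).toIntermediateField σ.commutes
  isQuadraticallyLocal_of_finiteDimensional_padic p F

end OrthPair

theorem stmt_10_general (E : Type) [Field E] (σ : E →+* E)
    (hF : IsQuadraticallyLocal (fixedSubfield σ))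
    (ι : E) (hι1 : σ ι ≠ ι) (hι2 : σ (ι * ι) = ι * ι)
    (n : ℕ) (j : Matrix (Fin n) (Fin n) E)
    (hjF : ∀ a b, σ (j a b) = j a b) (hjU : IsUnit j) (hjsym : jᵀ = j) :
    (∀ x₁ x₂ x₃, SXj σ j x₁ → SXj σ j x₂ → SXj σ j x₃ →
      orbSG σ j x₁ x₂ ∨ orbSG σ j x₁ x₃ ∨ orbSG σ j x₂ x₃) ∧
    (∀ x₁ x₂ x₃, Xj σ j x₁ → x₁.det ≠ 1 → Xj σ j x₂ → x₂.det ≠ 1 →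
      Xj σ j x₃ → x₃.det ≠ 1 →
      orbSG σ j x₁ x₂ ∨ orbSG σ j x₁ x₃ ∨ orbSG σ j x₂ x₃) ∧
    (n = 2 → (∃ c, σ c = c ∧ c ≠ 0 ∧ j.det = -(c * c)) →
      ∃ x₀, SXj σ j x₀ ∧ ∀ x, SXj σ j x → orbSG σ j x₀ x) ∧
    (n = 2 → (∃ c, σ c = c ∧ c ≠ 0 ∧ j.det = -(ι * ι * (c * c))) →
      ∃ x₀, (Xj σ j x₀ ∧ x₀.det ≠ 1) ∧
        ∀ x, Xj σ j x → x.det ≠ 1 → orbSG σ j x₀ x) := by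
  have hι : σ ι = -ι :=
    (mul_self_eq_mul_self_iff.1 ((map_mul σ ι ι).symm.trans hι2)).resolve_left hι1
  have := hF.infinite
  have h2 : (2 : E) ≠ 0 := fun h => hF.two_ne_zero (Subtype.ext h)
  have hι0 : ι ≠ 0 := fun h => hι1 (by rw [h, map_zero])
  have hj : j.map σ = j := Matrix.ext hjF
  have hjd : j.det ≠ 0 := ((isUnit_iff_isUnit_det j).1 hjU).ne_zero
  have det_eq {x} (hx : Xj σ j x) (h : x.det ≠ 1) : x.det = -1 :=
    (hx.1.det_eq_one_or_neg_one hjd).resolve_left h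
  have at_most_two {d x₁ x₂ x₃} (h₁ : Xj σ j x₁) (h₂ : Xj σ j x₂) (h₃ : Xj σ j x₃)
      (d₁ : x₁.det = d) (d₂ : x₂.det = d) (d₃ : x₃.det = d) :
      orbSG σ j x₁ x₂ ∨ orbSG σ j x₁ x₃ ∨ orbSG σ j x₂ x₃ := by
    have := exists_orbSG_of_det_eq hF hι0 hι hj hjd hjsym (x := ![x₁, x₂, x₃])
      (by simp [Fin.forall_fin_succ, h₁, h₂, h₃]) (by simp [Fin.forall_fin_succ, d₁, d₂, d₃])
    simpa [Fin.exists_fin_succ, or_assoc] using this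
  refine ⟨fun _ _ _ h₁ h₂ h₃ => at_most_two h₁.1 h₂.1 h₃.1 h₁.2 h₂.2 h₃.2,
    fun _ _ _ h₁ d₁ h₂ d₂ h₃ d₃ =>
      at_most_two h₁ h₂ h₃ (det_eq h₁ d₁) (det_eq h₂ d₂) (det_eq h₃ d₃), ?_, ?_⟩
  · rintro rfl ⟨c, hc, -, hjc⟩
    refine ⟨1, sXj_one σ j, fun x hx => ?_⟩
    exact orbSG_of_mul_self_mul_det_eq hF.two_ne_zero hι0 hι hj hjd hjsym one_ne_zero hc
      (by rw [hjc]; ring) (sXj_one σ j).1 hx.1 (by rw [hx.2, det_one]) (by simp)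
  · rintro rfl ⟨c, hc, -, hjc⟩
    obtain ⟨x₀, hx₀, d₀⟩ := exists_xj_det_eq_neg_one hF.two_ne_zero hj hjU hjsym
    refine ⟨x₀, ⟨hx₀, ?_⟩, fun x hx d => ?_⟩
    · exact d₀ ▸ fun h => h2 (by linear_combination -h)
    · exact orbSG_of_mul_self_mul_det_eq hF.two_ne_zero hι0 hι hj hjd hjsym hι0 (c := ι * ι * c)
        (by rw [map_mul, hι2, hc]) (by rw [hjc]; ring) hx₀ hx (by rw [d₀, det_eq hx d])
        (by rw [d₀, hι]; ring)

/-- In the orthogonal case, each of `SX^j` and `X^j \ SX^j` contains at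
most two `SG^j(E)`-orbits.  Moreover, for `n = 2`: if `det j ∈ -F^{×2}` then `SX^j` is a
single `SG^j(E)`-orbit, and if `det j ∈ -ι²·F^{×2}` then `X^j \ SX^j` is a single
`SG^j(E)`-orbit.  (`F` is the fixed field of `σ`, and `ι ∈ E \ F` satisfies `ι² ∈ F`.) -/
theorem stmt_10 (p : ℕ) [Fact p.Prime]
    (E : Type) [Field E] [Algebra ℚ_[p] E] [FiniteDimensional ℚ_[p] E]
    (σ : E ≃ₐ[ℚ_[p]] E) (hσ1 : σ ≠ 1) (hσ2 : σ * σ = 1)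
    (ι : E) (hι1 : σ ι ≠ ι) (hι2 : σ (ι * ι) = ι * ι)
    (n : ℕ) (hn : 1 ≤ n)
    (j : Matrix (Fin n) (Fin n) E)
    (hjF : ∀ a b, σ (j a b) = j a b) (hjU : IsUnit j) (hjsym : jᵀ = j) :
    -- SX^j contains at most two SG^j(E)-orbits
    (∀ x₁ x₂ x₃, SXj ⇑σ j x₁ → SXj ⇑σ j x₂ → SXj ⇑σ j x₃ →
      orbSG ⇑σ j x₁ x₂ ∨ orbSG ⇑σ j x₁ x₃ ∨ orbSG ⇑σ j x₂ x₃) ∧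
    -- X^j \ SX^j contains at most two SG^j(E)-orbits
    (∀ x₁ x₂ x₃, Xj ⇑σ j x₁ → x₁.det ≠ 1 → Xj ⇑σ j x₂ → x₂.det ≠ 1 →
      Xj ⇑σ j x₃ → x₃.det ≠ 1 →
      orbSG ⇑σ j x₁ x₂ ∨ orbSG ⇑σ j x₁ x₃ ∨ orbSG ⇑σ j x₂ x₃) ∧
    -- n = 2, det j ∈ -F^{×2}: SX^j is a single orbit
    (n = 2 → (∃ c, σ c = c ∧ c ≠ 0 ∧ j.det = -(c * c)) →
      ∃ x₀, SXj ⇑σ j x₀ ∧ ∀ x, SXj ⇑σ j x → orbSG ⇑σ j x₀ x) ∧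
    -- n = 2, det j ∈ -ι²·F^{×2}: X^j \ SX^j is a single orbit
    (n = 2 → (∃ c, σ c = c ∧ c ≠ 0 ∧ j.det = -(ι * ι * (c * c))) →
      ∃ x₀, (Xj ⇑σ j x₀ ∧ x₀.det ≠ 1) ∧
        ∀ x, Xj ⇑σ j x → x.det ≠ 1 → orbSG ⇑σ j x₀ x) := by
  exact stmt_10_general E (σ : E →+* E) (isQuadraticallyLocal_fixedSubfield p (σ : E →ₐ[ℚ_[p]] E))
    ι hι1 hι2 n j hjF hjU hjsym
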